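/- There exists an absolute constant C > 0 such that for all integers n > m ≥ 1, writing u = n/m, there is a real number E with |E| ≤ C·( n^{−1/m}/(1 − n^{−1/m}) + (m/n)/(1 − (m/n)^{1/m}) ) such that | p_{n,m} · √(2π·n·m) · exp( u·log n − u − ∑_{i=1}^{m} d_{m,i}·n^{1−i/m} − E ) − 1 | ≤ C / max{ log u, n^{1/m} }. -/

import Mathlib

open Real

noncomputable section

/-- Predicate characterizing the Dickman function `ρ : [0,∞) → (0,∞)`:
continuous on `[0,∞)`, positive, equal to `1` on `[0,1]`, and satisfying the
delay differential equation `t·ρ'(t) + ρ(t-1) = 0` for `t > 1`. -/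
def IsDickman (ρ : ℝ → ℝ) : Prop :=
  ContinuousOn ρ (Set.Ici 0) ∧
  (∀ t : ℝ, 0 ≤ t → 0 < ρ t) ∧
  (∀ t ∈ Set.Icc (0:ℝ) 1, ρ t = 1) ∧
  (∀ t : ℝ, 1 < t → HasDerivAt ρ (-(ρ (t - 1)) / t) t)

/-- `ξ(u)`: for `u > 1`, the unique positive solution of `e^ξ = 1 + u·ξ`; otherwise `0`. -/
def xi (u : ℝ) : ℝ :=
  open Classical in
  if h : ∃ x : ℝ, 0 < x ∧ Real.exp x = 1 + u * x then h.choose else 0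

/-- `p_{n,m}`: probability that a uniformly random permutation of `{1,…,n}` is `m`-friable,
i.e. has no cycle of length greater than `m`. -/
def permProb (n m : ℕ) : ℝ :=
  (Nat.card {σ : Equiv.Perm (Fin n) // ∀ c ∈ σ.cycleType, c ≤ m} : ℝ) /
    (Nat.factorial n : ℝ)

/-- `p_{n,m,q}`: proportion of monic polynomials of degree `n` over a finite field `F`
(of cardinality `q`) that are `m`-friable, i.e. all of whose monic irreducible factors
have degree at most `m`. -/
def polyProb (F : Type) [Field F] [Fintype F] (n m : ℕ) : ℝ :=
  (Nat.card {f : Polynomial F // f.Monic ∧ f.natDegree = n ∧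
      ∀ p : Polynomial F, p.Monic → Irreducible p → p ∣ f → p.natDegree ≤ m} : ℝ) /
    (Fintype.card F : ℝ) ^ n

/-- `F_q(z) = ∏_{deg P ≤ m} (1 - (z/q)^{deg P})⁻¹`, the product over monic irreducible
polynomials `P` over `F` of degree at most `m`. -/
def FqFun (F : Type) [Field F] [Fintype F] (m : ℕ) (z : ℝ) : ℝ :=
  ∏ᶠ p ∈ {p : Polynomial F | p.Monic ∧ Irreducible p ∧ p.natDegree ≤ m},
    (1 - (z / (Fintype.card F : ℝ)) ^ p.natDegree)⁻¹

/-- `G_q(z) = F_q(z) · exp(-∑_{i=1}^m z^i/i)`. -/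
def Gq (F : Type) [Field F] [Fintype F] (m : ℕ) (z : ℝ) : ℝ :=
  FqFun F m z * Real.exp (-(∑ i ∈ Finset.Icc 1 m, z ^ i / (i : ℝ)))

/-- The coefficients `d_{m,i}`. -/
def dcoef (m i : ℕ) : ℝ :=
  if i = m then -(1 / (m : ℝ)) * ∑ j ∈ Finset.Icc 2 m, (1 : ℝ) / (j : ℝ)
  else Real.Gamma ((i : ℝ) + (i : ℝ) / (m : ℝ)) /
    (((m : ℝ) - (i : ℝ)) * (Nat.factorial i : ℝ) * Real.Gamma (1 + (i : ℝ) / (m : ℝ)))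

/-- `T(s) = ∫₀^s ((e^t - 1)/t)·((t/m)/(1 - e^{-t/m}) - 1) dt`, integrand extended by `0` at `t = 0`. -/
def Tfun (m : ℕ) (s : ℝ) : ℝ :=
  ∫ t in (0:ℝ)..s,
    if t = 0 then 0 else
      ((Real.exp t - 1) / t) * ((t / (m : ℝ)) / (1 - Real.exp (-t / (m : ℝ))) - 1)

end

/-!
The generating function of `n ↦ p_{n,m}` is `exp (∑ j ∈ [1, m], z ^ j / j)`. On the circle of radius
`1 / y`, where `n * y ^ m * (1 - y) = 1`, Cauchy's formula and a local limit estimate show that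
`p_{n,m} * √(2 * π * n * m)` is the exponential of the phase
`∑ j ∈ [1, m], y ^ (-j) / j + n * log y`, up to a factor whose logarithm is bounded by the first of
the two error terms. Since `y * (1 - y) ^ (1 / m) = n ^ (-1 / m)`, Lagrange inversion expands
`-log (1 - y)` in powers of `n ^ (-1 / m)`, hence the phase in the powers `n ^ (1 - i / m)`; this is
where the coefficients `d_{m,i}` come from. The terms `i ≤ m` form the exponent of the theorem. The
remaining ones, as a power series in `y` multiplied by `y ^ m`, start in degree `m + 1` and have
coefficients `O(k / m)` in degree `k`, so that they contribute `O(y / (1 - y))`.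

The saddle point method is needed only for `2 ≤ m ≤ n ^ (2 / 3)`: for larger `m` the error term is
so large that trivial bounds for `p_{n,m}` suffice, and `m = 1` is Stirling's formula. With `E` the
logarithm of the exact ratio, the product to be compared with `1` is equal to `1`.
-/

section PowerSeriesValues

open Finset PowerSeries

variable {𝕜 : Type*} [RCLike 𝕜]

/-- The real power series `P` converges at the (real or complex) point `z`, with sum `s`. It
transfers identities between formal power series to identities between functions. -/
def HasValueAt (P : ℝ⟦X⟧) (z s : 𝕜) : Prop :=
  HasSum (fun k ↦ ((coeff k P : ℝ) : 𝕜) * z ^ k) s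

namespace HasValueAt

variable {P Q : ℝ⟦X⟧} {z s t : 𝕜}

lemma add (hP : HasValueAt P z s) (hQ : HasValueAt Q z t) : HasValueAt (P + Q) z (s + t) := by
  simpa only [HasValueAt, map_add, add_mul] using HasSum.add hP hQ

lemma sub (hP : HasValueAt P z s) (hQ : HasValueAt Q z t) : HasValueAt (P - Q) z (s - t) := by
  simpa only [HasValueAt, map_sub, sub_mul] using HasSum.sub hP hQ

lemma smul (c : ℝ) (hP : HasValueAt P z s) : HasValueAt (c • P) z (c * s) := by
  simpa only [HasValueAt, coeff_smul, smul_eq_mul, RCLike.ofReal_mul, mul_assoc]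
    using HasSum.mul_left (c : 𝕜) hP

lemma X_pow (n : ℕ) : HasValueAt (X ^ n) z (z ^ n) := by
  have h := hasSum_single (f := fun k ↦ ((coeff k (X ^ n : ℝ⟦X⟧) : ℝ) : 𝕜) * z ^ k) n
    (fun k hk ↦ by simp [coeff_X_pow, hk])
  simpa [HasValueAt] using h

lemma one : HasValueAt 1 z 1 := by
  simpa only [pow_zero] using X_pow (z := z) 0

lemma mul (hP : HasValueAt P z s) (hQ : HasValueAt Q z t) : HasValueAt (P * Q) z (s * t) := by
  have hterm : ∀ n, ∑ kl ∈ antidiagonal n,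
      (((coeff kl.1 P : ℝ) : 𝕜) * z ^ kl.1) * (((coeff kl.2 Q : ℝ) : 𝕜) * z ^ kl.2) =
        ((coeff n (P * Q) : ℝ) : 𝕜) * z ^ n := by
    intro n
    rw [coeff_mul, RCLike.ofReal_sum, sum_mul]
    refine sum_congr rfl fun kl hkl ↦ ?_
    rw [← mem_antidiagonal.1 hkl, pow_add, RCLike.ofReal_mul]
    ring
  have hPn := summable_norm_iff.2 hP.summable
  have hQn := summable_norm_iff.2 hQ.summable
  have hsum := (summable_norm_sum_mul_antidiagonal_of_summable_norm hPn hQn).of_norm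
  have htsum := tsum_mul_tsum_eq_tsum_sum_antidiagonal_of_summable_norm hPn hQn
  rw [hP.tsum_eq, hQ.tsum_eq] at htsum
  simpa only [HasValueAt, htsum, hterm] using hsum.hasSum

lemma sum {ι : Type*} (S : Finset ι) {P : ι → ℝ⟦X⟧} {s : ι → 𝕜}
    (h : ∀ i ∈ S, HasValueAt (P i) z (s i)) : HasValueAt (∑ i ∈ S, P i) z (∑ i ∈ S, s i) := by
  simpa only [HasValueAt, map_sum, sum_mul] using hasSum_sum h

lemma prod {ι : Type*} (S : Finset ι) {P : ι → ℝ⟦X⟧} {s : ι → 𝕜}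
    (h : ∀ i ∈ S, HasValueAt (P i) z (s i)) : HasValueAt (∏ i ∈ S, P i) z (∏ i ∈ S, s i) := by
  induction S using Finset.cons_induction with
  | empty => simpa only [prod_empty] using one
  | cons a S ha ih =>
    rw [prod_cons, prod_cons]
    exact (h a (mem_cons_self a S)).mul (ih fun i hi ↦ h i (mem_cons_of_mem hi))

end HasValueAt

end PowerSeriesValues

section GeneratingFunction

open Finset PowerSeries
open scoped Nat PowerSeries.WithPiTopology

/-- The weight `1 / (i ^ c * c!)` which `c` cycles of length `i` contribute to the proportion of
permutations with a given cycle type. -/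
noncomputable def cycleWeight (i c : ℕ) : ℝ := ((i : ℝ) ^ c * c !)⁻¹

/-- The power series `exp (X ^ i / i)`, generating function of the weights of the cycles of
length `i`. -/
noncomputable def cycleSeries (i : ℕ) : ℝ⟦X⟧ :=
  PowerSeries.mk fun k ↦ if i ∣ k then cycleWeight i (k / i) else 0

/-- The Taylor polynomial of degree `m` of `-log (1 - z)`. -/
def truncLog {𝕜 : Type*} [Field 𝕜] (m : ℕ) (z : 𝕜) : 𝕜 :=
  ∑ j ∈ range m, z ^ (j + 1) / (j + 1 : ℕ)

/-- The power series `exp (∑ i ∈ [1, m], X ^ i / i)`, generating function of `n ↦ permProb n m`. -/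
noncomputable def friableSeries (m : ℕ) : ℝ⟦X⟧ := ∏ i ∈ range m, cycleSeries (i + 1)

lemma cycleWeight_zero (i : ℕ) : cycleWeight i 0 = 1 := by simp [cycleWeight]

lemma mul_cycleWeight_succ {i : ℕ} (hi : i ≠ 0) (c : ℕ) :
    (i * (c + 1) : ℝ) * cycleWeight i (c + 1) = cycleWeight i c := by
  rw [cycleWeight, cycleWeight, Nat.factorial_succ, pow_succ]
  push_cast
  field_simp

section CycleTypeCount

lemma prod_toFinset_eq_mul_prod_filter_two_le {β : Type*} [CommMonoid β] {s : Multiset ℕ}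
    (hs : ∀ i ∈ s, 0 < i) (f : ℕ → ℕ → β) (hf : ∀ i, f i 0 = 1) :
    ∏ i ∈ s.toFinset, f i (s.count i) =
      f 1 (s.count 1) * ∏ i ∈ (s.filter (2 ≤ ·)).toFinset, f i ((s.filter (2 ≤ ·)).count i) := by
  have hcount : ∀ i ∈ (s.filter (2 ≤ ·)).toFinset,
      f i ((s.filter (2 ≤ ·)).count i) = f i (s.count i) := fun i hi ↦ by
    rw [Multiset.count_filter_of_pos (Multiset.mem_filter.1 (Multiset.mem_toFinset.1 hi)).2]
  have hone : 1 ∉ (s.filter (2 ≤ ·)).toFinset := by simp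
  rw [prod_congr rfl hcount, ← prod_insert (f := fun i ↦ f i (s.count i)) hone]
  refine prod_subset (fun i hi ↦ ?_) fun i _ hi ↦ ?_
  · have hpos := hs i (Multiset.mem_toFinset.1 hi)
    rw [mem_insert, Multiset.mem_toFinset, Multiset.mem_filter]
    exact (eq_or_ne i 1).imp id fun h ↦ ⟨Multiset.mem_toFinset.1 hi, by omega⟩
  · rw [Multiset.count_eq_zero_of_notMem (mt Multiset.mem_toFinset.2 hi), hf]

lemma eq_filter_two_le_add_replicate_one {s : Multiset ℕ} (hs : ∀ i ∈ s, 0 < i) :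
    s = s.filter (2 ≤ ·) + Multiset.replicate (s.count 1) 1 := by
  conv_lhs => rw [← Multiset.filter_add_not (2 ≤ ·) s]
  rw [← Multiset.filter_eq']
  congr 1
  exact Multiset.filter_congr fun i hi ↦ by have := hs i hi; omega

lemma sum_filter_two_le_add_count_one {N : ℕ} (p : N.Partition) :
    (p.parts.filter (2 ≤ ·)).sum + p.parts.count 1 = N := by
  have h := congrArg Multiset.sum (eq_filter_two_le_add_replicate_one fun _ ↦ p.parts_pos)
  simpa only [p.parts_sum, Multiset.sum_add, Multiset.sum_replicate, smul_eq_mul, mul_one]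
    using h.symm

variable {α : Type*} [Fintype α] [DecidableEq α]

lemma partition_eq_iff_cycleType_eq (p : (Fintype.card α).Partition) (σ : Equiv.Perm α) :
    σ.partition = p ↔ σ.cycleType = p.parts.filter (2 ≤ ·) := by
  refine ⟨fun h ↦ h ▸ Equiv.Perm.filter_parts_partition_eq_cycleType.symm, fun h ↦ ?_⟩
  have hfilter : σ.partition.parts.filter (2 ≤ ·) = p.parts.filter (2 ≤ ·) :=
    Equiv.Perm.filter_parts_partition_eq_cycleType.trans h
  have hcount : σ.partition.parts.count 1 = p.parts.count 1 := by
    have h₁ := sum_filter_two_le_add_count_one p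
    have h₂ := sum_filter_two_le_add_count_one σ.partition
    rw [hfilter] at h₂
    omega
  ext1
  rw [eq_filter_two_le_add_replicate_one fun _ ↦ σ.partition.parts_pos, hfilter, hcount,
    ← eq_filter_two_le_add_replicate_one fun _ ↦ p.parts_pos]

lemma card_partition_eq_mul_prod (p : (Fintype.card α).Partition) :
    #{σ : Equiv.Perm α | σ.partition = p} *
      ∏ i ∈ p.parts.toFinset, (i ^ p.parts.count i * (p.parts.count i)!) = (Fintype.card α)! := by
  have hsum := sum_filter_two_le_add_count_one p
  have hcard := Equiv.Perm.card_of_cycleType_mul_eq (α := α) (p.parts.filter (2 ≤ ·))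
  rw [if_pos ⟨by omega, fun _ hi ↦ (Multiset.mem_filter.1 hi).2⟩,
    show Fintype.card α - (p.parts.filter (2 ≤ ·)).sum = p.parts.count 1 by omega] at hcard
  simp only [partition_eq_iff_cycleType_eq]
  rw [prod_toFinset_eq_mul_prod_filter_two_le (fun _ ↦ p.parts_pos) (fun i c ↦ i ^ c * c !)
    (by simp), prod_mul_distrib, ← prod_multiset_count, one_pow, one_mul, ← hcard, mul_assoc]

lemma card_partition_div_factorial (p : (Fintype.card α).Partition) :
    (#{σ : Equiv.Perm α | σ.partition = p} : ℝ) / (Fintype.card α)! =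
      ∏ i ∈ p.parts.toFinset, cycleWeight i (p.parts.count i) := by
  have hne : ∏ i ∈ p.parts.toFinset, ((i : ℝ) ^ p.parts.count i * (p.parts.count i)!) ≠ 0 :=
    prod_ne_zero_iff.2 fun i hi ↦ by
      have := p.parts_pos (Multiset.mem_toFinset.1 hi)
      positivity
  simp only [cycleWeight]
  rw [prod_inv_distrib, div_eq_iff (by positivity), ← div_eq_inv_mul, eq_div_iff hne]
  exact_mod_cast card_partition_eq_mul_prod p

end CycleTypeCount

lemma one_add_tsum_smul_X_pow (i : ℕ) {g : ℕ → ℝ} (hg : g 0 = 1) :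
    (1 : ℝ⟦X⟧) + ∑' j, g (j + 1) • X ^ ((i + 1) * (j + 1)) =
      PowerSeries.mk fun k ↦ if i + 1 ∣ k then g (k / (i + 1)) else 0 := by
  ext k
  have hs := Nat.Partition.summable_genFun_term (fun _ c ↦ g c) i
  rw [map_add, hs.map_tsum _ (WithPiTopology.continuous_coeff _ _), coeff_mk]
  simp only [coeff_smul, coeff_X_pow, smul_eq_mul, mul_ite, mul_one, mul_zero]
  split_ifs with hdvd
  · obtain ⟨_ | c, rfl⟩ := hdvd
    · simp [hg]
    · rw [tsum_eq_single c fun b hb ↦ if_neg fun h ↦ hb ?_]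
      · simp
      · have := Nat.eq_of_mul_eq_mul_left i.succ_pos h
        omega
  · have hk : k ≠ 0 := fun h ↦ hdvd (h ▸ dvd_zero _)
    have hne : ∀ j, k ≠ (i + 1) * (j + 1) := fun j h ↦ hdvd ⟨_, h⟩
    simp [hne, coeff_one, hk]

lemma genFun_cycleWeight (m : ℕ) :
    Nat.Partition.genFun (fun i c ↦ if i ≤ m then cycleWeight i c else 0) = friableSeries m := by
  have hfactor : ∀ i, (1 : ℝ⟦X⟧) + ∑' j, (if i + 1 ≤ m then cycleWeight (i + 1) (j + 1) else 0) •
      X ^ ((i + 1) * (j + 1)) = if i ∈ range m then cycleSeries (i + 1) else 1 := by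
    intro i
    split_ifs with hle hmem hmem
    · exact one_add_tsum_smul_X_pow i (cycleWeight_zero _)
    · exact absurd (mem_range.2 hle) hmem
    · exact absurd (mem_range.1 hmem) hle
    · simp
  have hprod := Nat.Partition.hasProd_genFun fun i c ↦ if i ≤ m then cycleWeight i c else 0
  simp only [hfactor] at hprod
  rw [← hprod.tprod_eq, tprod_eq_prod fun i hi ↦ if_neg hi]
  exact prod_congr rfl fun i hi ↦ if_pos hi

lemma cycleType_le_iff_parts_le {m : ℕ} (hm : 1 ≤ m) {α : Type*} [Fintype α] [DecidableEq α]
    (σ : Equiv.Perm α) :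
    (∀ c ∈ σ.cycleType, c ≤ m) ↔ ∀ c ∈ σ.partition.parts, c ≤ m := by
  simp only [Equiv.Perm.parts_partition, Multiset.mem_add, Multiset.mem_replicate]
  refine ⟨fun h c hc ↦ hc.elim (h c) fun hc ↦ hc.2.le.trans hm, fun h c hc ↦ h c (.inl hc)⟩

variable {m : ℕ}

lemma permProb_eq_coeff (n : ℕ) (hm : 1 ≤ m) : permProb n m = coeff n (friableSeries m) := by
  classical
  suffices h : permProb n m = coeff (Fintype.card (Fin n)) (friableSeries m) by
    rwa [Fintype.card_fin] at h
  rw [← genFun_cycleWeight, Nat.Partition.coeff_genFun, permProb, Nat.card_eq_fintype_card,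
    Fintype.card_subtype, card_eq_sum_card_fiberwise (t := univ) (f := Equiv.Perm.partition)
      fun _ _ ↦ mem_coe.2 (mem_univ _), Nat.cast_sum, sum_div]
  refine sum_congr rfl fun p _ ↦ ?_
  simp only [filter_filter, cycleType_le_iff_parts_le hm, Finsupp.prod, Multiset.toFinsupp_support,
    Multiset.toFinsupp_apply]
  by_cases hp : ∀ c ∈ p.parts, c ≤ m
  · have hcard := card_partition_div_factorial p
    rw [show (Fintype.card (Fin n))! = n ! from congrArg _ (Fintype.card_fin n)] at hcard
    have hfilter : ∀ σ : Equiv.Perm (Fin n),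
        ((∀ c ∈ σ.partition.parts, c ≤ m) ∧ σ.partition = p) ↔ σ.partition = p :=
      fun σ ↦ and_iff_right_of_imp fun h ↦ h ▸ hp
    simp only [hfilter, hcard]
    exact prod_congr rfl fun i hi ↦ (if_pos (hp i (Multiset.mem_toFinset.1 hi))).symm
  · have hfilter : ∀ σ : Equiv.Perm (Fin n),
        ¬((∀ c ∈ σ.partition.parts, c ≤ m) ∧ σ.partition = p) := fun σ h ↦ hp (h.2 ▸ h.1)
    push Not at hp
    obtain ⟨c, hc, hcm⟩ := hp
    rw [prod_eq_zero (Multiset.mem_toFinset.2 hc) (if_neg hcm.not_ge)]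
    simp [hfilter]

lemma hasValueAt_cycleSeries {𝕜 : Type*} [RCLike 𝕜] {i : ℕ} (hi : i ≠ 0) (z : 𝕜) :
    HasValueAt (cycleSeries i) z (NormedSpace.exp (z ^ i / i)) := by
  have hinj : Function.Injective (i * ·) := mul_right_injective₀ hi
  rw [HasValueAt, ← hinj.hasSum_iff fun k hk ↦ ?_]
  · convert NormedSpace.expSeries_div_hasSum_exp (z ^ i / i) using 2 with c
    simp only [Function.comp_apply, cycleSeries, coeff_mk, dvd_mul_right, if_true,
      Nat.mul_div_cancel_left _ hi.bot_lt, cycleWeight]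
    push_cast
    rw [pow_mul, div_pow]
    field_simp
  · rw [cycleSeries, coeff_mk, if_neg fun ⟨c, hc⟩ ↦ hk ⟨c, hc.symm⟩]
    simp

lemma hasValueAt_friableSeries (m : ℕ) (z : ℂ) :
    HasValueAt (friableSeries m) z (Complex.exp (truncLog m z)) := by
  rw [truncLog, Complex.exp_sum]
  refine HasValueAt.prod _ fun j _ ↦ ?_
  rw [Complex.exp_eq_exp_ℂ]
  exact hasValueAt_cycleSeries j.succ_ne_zero z

lemma X_mul_derivative_cycleSeries {i : ℕ} (hi : i ≠ 0) :
    X * derivative ℝ (cycleSeries i) = X ^ i * cycleSeries i := by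
  ext (_ | k)
  · simp [coeff_X_pow_mul', hi]
  rw [coeff_X_pow_mul', coeff_succ_X_mul, coeff_derivative, cycleSeries, coeff_mk, coeff_mk]
  by_cases hdvd : i ∣ k + 1
  · obtain ⟨_ | c, hc⟩ := hdvd
    · omega
    have hpos := hi.bot_lt
    have hcast : (k : ℝ) + 1 = i * (c + 1) := by exact_mod_cast hc
    rw [hcast, hc, if_pos (dvd_mul_right _ _), if_pos (Nat.le_mul_of_pos_right i c.succ_pos),
      Nat.mul_div_cancel_left _ hpos, Nat.mul_succ, Nat.add_sub_cancel, if_pos (dvd_mul_right _ _),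
      Nat.mul_div_cancel_left _ hpos, mul_comm, mul_cycleWeight_succ hi]
  · rw [if_neg hdvd, zero_mul]
    split_ifs with hle hdvd'
    · exact absurd ((Nat.dvd_sub_iff_left hle dvd_rfl).1 hdvd') hdvd
    · rfl
    · rfl

lemma X_mul_derivative_friableSeries (m : ℕ) :
    X * derivative ℝ (friableSeries m) = (∑ i ∈ range m, X ^ (i + 1)) * friableSeries m := by
  induction m with
  | zero => simp [friableSeries]
  | succ m ih =>
    have hsucc : friableSeries (m + 1) = friableSeries m * cycleSeries (m + 1) :=
      prod_range_succ _ _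
    rw [hsucc, Derivation.leibniz, sum_range_succ, smul_eq_mul, smul_eq_mul]
    linear_combination friableSeries m * X_mul_derivative_cycleSeries (Nat.add_one_ne_zero m) +
      cycleSeries (m + 1) * ih

end GeneratingFunction

section FriableProbability

open Finset PowerSeries
open scoped Nat

variable {m n : ℕ}

lemma permProb_pos (n m : ℕ) : 0 < permProb n m := by
  have : Nonempty {σ : Equiv.Perm (Fin n) // ∀ c ∈ σ.cycleType, c ≤ m} := ⟨1, by simp⟩
  exact div_pos (Nat.cast_pos.2 Nat.card_pos) (by positivity)

lemma permProb_le_one (n m : ℕ) : permProb n m ≤ 1 := by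
  have hcard : Nat.card {σ : Equiv.Perm (Fin n) // ∀ c ∈ σ.cycleType, c ≤ m} ≤ n ! := by
    simpa only [Nat.card_perm, Nat.card_fin] using
      Finite.card_subtype_le fun σ : Equiv.Perm (Fin n) ↦ ∀ c ∈ σ.cycleType, c ≤ m
  exact div_le_one_of_le₀ (mod_cast hcard) (by positivity)

lemma permProb_of_le (h : n ≤ m) : permProb n m = 1 := by
  have hall : ∀ σ : Equiv.Perm (Fin n), ∀ c ∈ σ.cycleType, c ≤ m := fun σ c hc ↦
    (Equiv.Perm.le_card_support_of_mem_cycleType hc).trans <|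
      σ.support.card_le_univ.trans ((Fintype.card_fin n).trans_le h)
  rw [permProb, Nat.card_congr (Equiv.subtypeUnivEquiv hall), Nat.card_perm, Nat.card_fin,
    div_self (by positivity)]

lemma permProb_one_right (n : ℕ) : permProb n 1 = (n ! : ℝ)⁻¹ := by
  simp [permProb_eq_coeff n le_rfl, friableSeries, cycleSeries, cycleWeight]

lemma mul_permProb_eq_sum (hm : 1 ≤ m) (h : m ≤ n) :
    n * permProb n m = ∑ i ∈ range m, permProb (n - (i + 1)) m := by
  obtain ⟨k, rfl⟩ := Nat.exists_eq_succ_of_ne_zero (Nat.one_le_iff_ne_zero.1 (hm.trans h))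
  have hcoeff := congrArg (coeff k.succ) (X_mul_derivative_friableSeries m)
  rw [sum_mul, map_sum, Nat.succ_eq_add_one, coeff_succ_X_mul, coeff_derivative] at hcoeff
  simp only [permProb_eq_coeff _ hm]
  rw [mul_comm, Nat.succ_eq_add_one, Nat.cast_succ, hcoeff]
  refine sum_congr rfl fun i hi ↦ ?_
  rw [coeff_X_pow_mul', if_pos ((Nat.succ_le_of_lt (mem_range.1 hi)).trans h)]

lemma permProb_sub_le (hm : 1 ≤ m) (h : m ≤ n) : permProb (n - m) m ≤ n * permProb n m := by
  rw [mul_permProb_eq_sum hm h]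
  have hle := single_le_sum (f := fun i ↦ permProb (n - (i + 1)) m)
    (fun i _ ↦ (permProb_pos _ m).le) (mem_range.2 (Nat.sub_one_lt_of_lt hm))
  simpa only [Nat.sub_add_cancel hm] using hle

lemma neg_div_mul_log_le_log_permProb {N : ℕ} (hm : 1 ≤ m) (hn : n ≤ N) :
    -((n : ℝ) / m) * log N ≤ log (permProb n m) := by
  induction n using Nat.strong_induction_on with
  | _ n ih =>
    rcases le_or_gt n m with hnm | hnm
    · have hprod : 0 ≤ (n : ℝ) / m * log N := by positivity
      rw [permProb_of_le hnm, log_one]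
      linarith
    · have hn0 : (0 : ℝ) < n := by exact_mod_cast hm.trans hnm.le
      have ih' := ih (n - m) (by omega) (by omega)
      have hsub : ((n - m : ℕ) : ℝ) / m = n / m - 1 := by
        rw [Nat.cast_sub hnm.le]
        field_simp
      have hstep := log_le_log (permProb_pos _ m) (permProb_sub_le hm hnm.le)
      rw [log_mul hn0.ne' (permProb_pos n m).ne'] at hstep
      have hlog : log n ≤ log N := log_le_log hn0 (mod_cast hn)
      rw [hsub] at ih'
      linarith

end FriableProbability

section FormalSeries

open Finset PowerSeries
open scoped Nat

/-- The coefficient of `X ^ l` in the binomial series `(1 - X) ^ β`. -/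
noncomputable def oneSubPowCoeff (β : ℝ) (l : ℕ) : ℝ := ∏ t ∈ range l, (t - β) / (t + 1)

/-- The binomial series `(1 - X) ^ β`, for a real exponent `β`. -/
noncomputable def oneSubPow (β : ℝ) : ℝ⟦X⟧ := PowerSeries.mk (oneSubPowCoeff β)

/-- The power series `-log (1 - X)`; its constant coefficient is `1 / 0 = 0`. -/
noncomputable def negLogOneSub : ℝ⟦X⟧ := PowerSeries.mk fun k ↦ 1 / (k : ℝ)

lemma oneSubPowCoeff_zero (β : ℝ) : oneSubPowCoeff β 0 = 1 := by simp [oneSubPowCoeff]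

lemma oneSubPowCoeff_succ (β : ℝ) (l : ℕ) :
    oneSubPowCoeff β (l + 1) = oneSubPowCoeff β l * ((l - β) / (l + 1)) :=
  prod_range_succ _ _

lemma succ_mul_oneSubPowCoeff_succ (β : ℝ) (l : ℕ) :
    (l + 1) * oneSubPowCoeff β (l + 1) = -β * oneSubPowCoeff (β - 1) l := by
  induction l with
  | zero => simp [oneSubPowCoeff]
  | succ l ih =>
    rw [oneSubPowCoeff_succ β (l + 1), oneSubPowCoeff_succ (β - 1) l]
    push_cast
    field_simp
    linear_combination (l + 1 - β) * ih

lemma oneSubPowCoeff_add_one_succ (β : ℝ) (l : ℕ) :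
    oneSubPowCoeff (β + 1) (l + 1) = oneSubPowCoeff β (l + 1) - oneSubPowCoeff β l := by
  have h := succ_mul_oneSubPowCoeff_succ (β + 1) l
  rw [add_sub_cancel_right] at h
  rw [oneSubPowCoeff_succ β, ← mul_right_inj' (Nat.cast_add_one_ne_zero (R := ℝ) l), h]
  field_simp
  ring

lemma oneSubPow_zero : oneSubPow 0 = 1 := by
  ext (_ | k)
  · simp [oneSubPow, oneSubPowCoeff_zero]
  · simp [oneSubPow, oneSubPowCoeff, coeff_one, prod_range_succ']

lemma one_sub_X_mul_oneSubPow (β : ℝ) : (1 - X) * oneSubPow (β - 1) = oneSubPow β := by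
  obtain ⟨γ, rfl⟩ : ∃ γ, β = γ + 1 := ⟨β - 1, by ring⟩
  rw [add_sub_cancel_right, sub_mul, one_mul]
  ext (_ | k)
  · simp [oneSubPow, oneSubPowCoeff_zero]
  · rw [map_sub, coeff_succ_X_mul]
    simp only [oneSubPow, coeff_mk, oneSubPowCoeff_add_one_succ]

lemma one_sub_X_mul_oneSubPow_neg_one : (1 - X) * oneSubPow (-1) = 1 := by
  rw [← zero_sub, one_sub_X_mul_oneSubPow, oneSubPow_zero]

lemma derivative_oneSubPow (β : ℝ) :
    derivative ℝ (oneSubPow β) = (-β) • oneSubPow (β - 1) := by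
  ext k
  rw [coeff_derivative, coeff_smul, oneSubPow, oneSubPow, coeff_mk, coeff_mk, smul_eq_mul,
    ← succ_mul_oneSubPowCoeff_succ, mul_comm]

lemma oneSubPowCoeff_neg_one (l : ℕ) : oneSubPowCoeff (-1) l = 1 :=
  prod_eq_one fun t _ ↦ by
    rw [sub_neg_eq_add]
    exact div_self (Nat.cast_add_one_ne_zero t)

lemma coeff_oneSubPow_neg_one_mul (V : ℝ⟦X⟧) (q : ℕ) :
    coeff q (oneSubPow (-1) * V) = ∑ k ∈ range (q + 1), coeff k V := by
  rw [mul_comm, coeff_mul, Nat.sum_antidiagonal_eq_sum_range_succ_mk]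
  simp only [oneSubPow, coeff_mk, oneSubPowCoeff_neg_one, mul_one]

lemma derivative_negLogOneSub : derivative ℝ negLogOneSub = oneSubPow (-1) := by
  ext k
  rw [coeff_derivative, negLogOneSub, oneSubPow, coeff_mk, coeff_mk, oneSubPowCoeff_neg_one,
    Nat.cast_succ, one_div_mul_cancel (Nat.cast_add_one_ne_zero k)]

/-- The coefficients, furnished by Lagrange inversion, of the expansion
`-log (1 - X) = ∑ i, lagrangeCoeff a i * (X * (1 - X) ^ a) ^ i`. -/
noncomputable def lagrangeCoeff (a : ℝ) (i : ℕ) : ℝ :=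
  (∏ t ∈ range (i - 1), (i * a + (t + 1))) / i !

lemma lagrangeCoeff_nonneg {a : ℝ} (ha : 0 ≤ a) (i : ℕ) : 0 ≤ lagrangeCoeff a i := by
  unfold lagrangeCoeff
  positivity

lemma prod_range_one_add_succ (k : ℕ) : ∏ t ∈ range k, (1 + ((t : ℝ) + 1)) = (k + 1)! := by
  rw [← prod_range_add_one_eq_factorial, prod_range_succ']
  push_cast
  rw [mul_one]
  exact prod_congr rfl fun t _ ↦ by ring

lemma lagrangeCoeff_le_one {a : ℝ} (ha : 0 ≤ a) {i : ℕ} (h : i * a ≤ 1) :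
    lagrangeCoeff a i ≤ 1 := by
  refine div_le_one_of_le₀ ?_ (by positivity)
  rcases i with _ | i
  · simp
  · rw [← prod_range_one_add_succ, Nat.add_sub_cancel]
    gcongr

lemma lagrangeCoeff_one_div_self {m : ℕ} (hm : 1 ≤ m) : lagrangeCoeff (1 / m) m = 1 := by
  obtain ⟨k, rfl⟩ := Nat.exists_eq_succ_of_ne_zero (Nat.one_le_iff_ne_zero.1 hm)
  rw [lagrangeCoeff, mul_one_div_cancel (Nat.cast_ne_zero.2 k.succ_ne_zero), Nat.succ_sub_one,
    prod_range_one_add_succ, div_self (by positivity)]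

/- Up to the sign `(-1) ^ s`, both factors are pieces of one falling factorial at `(1 + a) * i - 1`,
which turns the convolution of the next lemma into an iterated difference of a polynomial. -/
lemma lagrangeCoeff_mul_oneSubPowCoeff (a : ℝ) (j s : ℕ) :
    lagrangeCoeff a (j + 1) * oneSubPowCoeff ((j + 1 : ℕ) * a) s =
      (-1) ^ s * ((j + 1 + s).choose (j + 1)) *
        (descPochhammer ℝ (j + s)).eval ((1 + a) * (j + 1 : ℕ) - 1) / (j + 1 + s)! := by
  have hchoose : (((j + 1 + s).choose (j + 1) : ℕ) : ℝ) * (j + 1)! * s ! = (j + 1 + s)! := by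
    have h := Nat.choose_mul_factorial_mul_factorial (Nat.le_add_right (j + 1) s)
    rw [Nat.add_sub_cancel_left] at h
    exact_mod_cast h
  have hs : ∏ x ∈ range s, ((x : ℝ) + 1) = s ! := mod_cast prod_range_add_one_eq_factorial s
  have hlow : ∏ t ∈ range j, ((1 + a) * (j + 1 : ℕ) - 1 - t) =
      ∏ t ∈ range j, ((j + 1 : ℕ) * a + (t + 1)) := by
    rw [← prod_range_reflect]
    refine prod_congr rfl fun t ht ↦ ?_
    have ht := mem_range.1 ht
    rw [Nat.cast_sub (by omega), Nat.cast_sub (by omega)]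
    push_cast
    ring
  have hhigh : ∏ t ∈ range s, ((1 + a) * (j + 1 : ℕ) - 1 - (j + t : ℕ)) =
      (-1) ^ s * ∏ t ∈ range s, (t - (j + 1 : ℕ) * a) := by
    rw [pow_eq_prod_const, ← prod_mul_distrib]
    refine prod_congr rfl fun t _ ↦ ?_
    push_cast
    ring
  have hsign : (-1 : ℝ) ^ s * (-1) ^ s = 1 := by rw [← mul_pow, neg_one_mul, neg_neg, one_pow]
  rw [descPochhammer_eval_eq_prod_range, prod_range_add, hlow, hhigh, lagrangeCoeff,
    oneSubPowCoeff, prod_div_distrib, hs, Nat.add_sub_cancel, div_mul_div_comm, ← hchoose,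
    div_eq_div_iff (by positivity)
      (by have := Nat.choose_pos (Nat.le_add_right (j + 1) s); positivity)]
  linear_combination -((∏ t ∈ range j, ((j + 1 : ℕ) * a + (t + 1))) *
    (∏ t ∈ range s, (t - (j + 1 : ℕ) * a)) * (j + 1 + s).choose (j + 1) * (j + 1)! * s !) * hsign

lemma sum_neg_one_pow_mul_choose_mul_descPochhammer (a : ℝ) (k : ℕ) :
    ∑ i ∈ range (k + 2), (-1) ^ (k + 1 - i) * ((k + 1).choose i : ℝ) *
      (descPochhammer ℝ k).eval ((1 + a) * i - 1) = 0 := by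
  set P : Polynomial ℝ := (descPochhammer ℝ k).comp (.C (1 + a) * .X - .C 1) with hP
  have hdeg : P.natDegree < k + 1 := by
    have hlin : (Polynomial.C (1 + a) * .X - .C 1).natDegree ≤ 1 := by compute_degree
    rw [hP, Polynomial.natDegree_comp, descPochhammer_natDegree]
    nlinarith
  have h := congrFun (Polynomial.fwdDiff_iter_eq_zero_of_degree_lt hdeg) 0
  rw [fwdDiff_iter_eq_sum_shift] at h
  simpa [hP] using h

lemma sum_lagrangeCoeff_mul_oneSubPowCoeff (a : ℝ) {k : ℕ} (hk : 1 ≤ k) :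
    ∑ i ∈ Icc 1 k, lagrangeCoeff a i * oneSubPowCoeff (i * a) (k - i) = 1 / k := by
  obtain ⟨k, rfl⟩ := Nat.exists_eq_succ_of_ne_zero (Nat.one_le_iff_ne_zero.1 hk)
  have h := sum_neg_one_pow_mul_choose_mul_descPochhammer a k
  have hzero : (descPochhammer ℝ k).eval ((1 + a) * (0 : ℕ) - 1) = (-1) ^ k * k ! := by
    rw [descPochhammer_eval_eq_prod_range, ← prod_range_add_one_eq_factorial, pow_eq_prod_const]
    push_cast
    rw [← prod_mul_distrib]
    exact prod_congr rfl fun t _ ↦ by ring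
  have hsign : (-1 : ℝ) ^ k * (-1) ^ k = 1 := by rw [← mul_pow, neg_one_mul, neg_neg, one_pow]
  have hterm : ∀ j ∈ range (k + 1),
      lagrangeCoeff a (j + 1) * oneSubPowCoeff ((j + 1 : ℕ) * a) (k - j) =
        (-1) ^ (k - j) * ((k + 1).choose (j + 1) : ℝ) *
          (descPochhammer ℝ k).eval ((1 + a) * (j + 1 : ℕ) - 1) / (k + 1)! := fun j hj ↦ by
    obtain ⟨s, rfl⟩ := Nat.exists_eq_add_of_le (Nat.lt_succ_iff.1 (mem_range.1 hj))
    rw [Nat.add_sub_cancel_left, lagrangeCoeff_mul_oneSubPowCoeff, add_right_comm]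
  rw [sum_range_succ', hzero] at h
  simp only [Nat.succ_sub_succ_eq_sub, Nat.sub_zero, Nat.choose_zero_right, Nat.cast_one] at h
  have hshift : ∑ i ∈ Icc 1 (k + 1), lagrangeCoeff a i * oneSubPowCoeff (i * a) (k + 1 - i) =
      ∑ j ∈ range (k + 1), lagrangeCoeff a (j + 1) * oneSubPowCoeff ((j + 1 : ℕ) * a) (k - j) := by
    rw [← Ico_add_one_right_eq_Icc, sum_Ico_eq_sum_range]
    refine sum_congr rfl fun j _ ↦ ?_
    rw [add_comm 1 j, Nat.add_sub_add_right]
  rw [Nat.succ_eq_add_one, hshift, sum_congr rfl hterm, ← sum_div, eq_neg_of_add_eq_zero_left h,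
    Nat.factorial_succ, div_eq_div_iff (by positivity) (by positivity), pow_succ]
  push_cast
  linear_combination ((k : ℝ) + 1) * k ! * hsign

end FormalSeries

section PhaseRemainder

open Finset PowerSeries
open scoped Nat

lemma Gamma_one_add_add_natCast {x : ℝ} (hx : 0 ≤ x) (k : ℕ) :
    Gamma (1 + x + k) = Gamma (1 + x) * ∏ t ∈ range k, (x + (t + 1)) := by
  induction k with
  | zero => simp
  | succ k ih =>
    rw [prod_range_succ, ← mul_assoc, ← ih, Nat.cast_succ, ← add_assoc,
      Gamma_add_one (by positivity)]
    ring

lemma dcoef_eq_lagrangeCoeff_div {m i : ℕ} (hi : 1 ≤ i) (him : i < m) :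
    dcoef m i = lagrangeCoeff (1 / m) i / (m - i) := by
  obtain ⟨j, rfl⟩ := Nat.exists_eq_succ_of_ne_zero (Nat.one_le_iff_ne_zero.1 hi)
  have hGamma := Gamma_one_add_add_natCast (x := (j + 1 : ℕ) / m) (by positivity) j
  have harg : ((j + 1 : ℕ) : ℝ) + (j + 1 : ℕ) / m = 1 + (j + 1 : ℕ) / m + j := by
    push_cast
    ring
  have hne : Gamma (1 + ((j + 1 : ℕ) : ℝ) / m) ≠ 0 := (Gamma_pos_of_pos (by positivity)).ne'
  have hsub : (m : ℝ) - (j + 1 : ℕ) ≠ 0 := sub_ne_zero.2 (by exact_mod_cast him.ne')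
  rw [dcoef, if_neg him.ne, Nat.succ_eq_add_one, harg, hGamma, lagrangeCoeff, Nat.add_sub_cancel]
  simp only [mul_one_div]
  field_simp

lemma abs_oneSubPowCoeff_le {α : ℝ} (h₀ : 0 ≤ α) (h₁ : α ≤ 1) {l : ℕ} (hl : 2 ≤ l) :
    |oneSubPowCoeff α l| ≤ (1 - α) / l := by
  induction l, hl using Nat.le_induction with
  | base =>
    have htwo : oneSubPowCoeff α 2 = -(α * (1 - α) / 2) := by
      rw [oneSubPowCoeff, prod_range_succ, prod_range_one]
      push_cast
      ring
    rw [htwo, abs_neg, abs_of_nonneg (by have := sub_nonneg.2 h₁; positivity)]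
    push_cast
    nlinarith
  | succ l hl ih =>
    have hl' : (2 : ℝ) ≤ l := mod_cast hl
    have hratio : 0 ≤ ((l : ℝ) - α) / (l + 1) := div_nonneg (by linarith) (by positivity)
    rw [oneSubPowCoeff_succ, abs_mul, abs_of_nonneg hratio]
    calc |oneSubPowCoeff α l| * ((l - α) / (l + 1))
        ≤ (1 - α) / l * (l / (l + 1)) :=
          mul_le_mul ih (by gcongr; linarith) hratio
            (div_nonneg (sub_nonneg.2 h₁) (Nat.cast_nonneg l))
      _ = (1 - α) / (l + 1 : ℕ) := by
          push_cast
          field_simp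

/-- What is left of `-log (1 - X)` after removing the terms of degree less than `m` of its expansion
in powers of `X * (1 - X) ^ (1 / m)`. -/
noncomputable def lagrangeRemainder (m : ℕ) : ℝ⟦X⟧ :=
  negLogOneSub - ∑ i ∈ Ico 1 m, lagrangeCoeff (1 / m) i • (X ^ i * oneSubPow (i * (1 / m)))

/-- The error made when the phase `∑ j ∈ [1, m], x ^ j / j - n * log x`, at `x = 1 / y` with
`n = y ^ (-m) / (1 - y)`, is expanded in the powers `n ^ (1 - i / m)` with coefficients `dcoef m i`,
`1 ≤ i < m`. It is multiplied by `y ^ m` and written as a formal power series in `y`. -/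
noncomputable def phaseRemainder (m : ℕ) : ℝ⟦X⟧ :=
  ∑ j ∈ Icc 1 m, (1 / (j : ℝ)) • X ^ (m - j) +
    (1 / (m : ℝ)) • ((negLogOneSub - 1) * oneSubPow (-1)) -
    ∑ i ∈ Ico 1 m, dcoef m i • (X ^ i * oneSubPow (i * (1 / m) - 1))

variable {m k : ℕ}

lemma coeff_lagrangeRemainder (m k : ℕ) :
    coeff k (lagrangeRemainder m) = 1 / k - ∑ i ∈ Ico 1 m with i ≤ k,
      lagrangeCoeff (1 / m) i * oneSubPowCoeff (i * (1 / m)) (k - i) := by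
  simp only [lagrangeRemainder, map_sub, map_sum, coeff_smul, coeff_X_pow_mul', smul_eq_mul,
    oneSubPow, negLogOneSub, coeff_mk, mul_ite, mul_zero, sum_filter]

lemma coeff_lagrangeRemainder_of_lt (hk : k < m) : coeff k (lagrangeRemainder m) = 0 := by
  have hfilter : {i ∈ Ico 1 m | i ≤ k} = Icc 1 k := by
    ext i
    simp only [mem_filter, mem_Ico, mem_Icc]
    omega
  rw [coeff_lagrangeRemainder, hfilter]
  rcases k.eq_zero_or_pos with rfl | hpos
  · simp
  · rw [sum_lagrangeCoeff_mul_oneSubPowCoeff _ hpos, sub_self]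

lemma coeff_lagrangeRemainder_self (hm : 1 ≤ m) : coeff m (lagrangeRemainder m) = 1 := by
  have hsum := sum_lagrangeCoeff_mul_oneSubPowCoeff (1 / (m : ℝ)) hm
  rw [← Ico_insert_right hm, sum_insert right_notMem_Ico, lagrangeCoeff_one_div_self hm,
    Nat.sub_self, oneSubPowCoeff_zero] at hsum
  rw [coeff_lagrangeRemainder, filter_true_of_mem fun i hi ↦ (mem_Ico.1 hi).2.le]
  linarith

lemma abs_coeff_lagrangeRemainder_le (hm : 1 ≤ m) (hk : m ≤ k) :
    |coeff k (lagrangeRemainder m)| ≤ 2 := by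
  rcases hk.eq_or_lt with rfl | hk
  · rw [coeff_lagrangeRemainder_self hm, abs_one]
    exact one_le_two
  have hm0 : (0 : ℝ) < m := mod_cast hm
  have hterm : ∀ i ∈ Ico 1 m,
      |lagrangeCoeff (1 / m) i * oneSubPowCoeff (i * (1 / m)) (k - i)| ≤ 1 / m := by
    intro i hi
    have hi := mem_Ico.1 hi
    have hia : (i : ℝ) * (1 / m) ≤ 1 := by
      rw [mul_one_div, div_le_one hm0]
      exact_mod_cast hi.2.le
    have hle : (m : ℝ) - i ≤ (k - i : ℕ) := by
      rw [Nat.cast_sub (hi.2.trans hk).le]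
      gcongr
    have hmi : (0 : ℝ) < m - i := sub_pos.2 (mod_cast hi.2)
    rw [abs_mul, abs_of_nonneg (lagrangeCoeff_nonneg (by positivity) i)]
    calc lagrangeCoeff (1 / m) i * |oneSubPowCoeff (i * (1 / m)) (k - i)|
        ≤ 1 * ((1 - i * (1 / m)) / (k - i : ℕ)) :=
          mul_le_mul (lagrangeCoeff_le_one (by positivity) hia)
            (abs_oneSubPowCoeff_le (by positivity) hia (by omega)) (abs_nonneg _) zero_le_one
      _ ≤ 1 * ((1 - i * (1 / m)) / (m - i)) := by gcongr
      _ = 1 / m := by field_simp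
  have hsum : |∑ i ∈ Ico 1 m,
      lagrangeCoeff (1 / m) i * oneSubPowCoeff (i * (1 / m)) (k - i)| ≤ 1 := by
    refine (abs_sum_le_sum_abs _ _).trans ((sum_le_card_nsmul _ _ _ hterm).trans ?_)
    rw [Nat.card_Ico, nsmul_eq_mul, mul_one_div, div_le_one hm0]
    exact_mod_cast m.sub_le 1
  have hk1 : |1 / (k : ℝ)| ≤ 1 := by
    rw [abs_of_nonneg (by positivity)]
    exact div_le_one_of_le₀ (by exact_mod_cast hm.trans hk.le) (by positivity)
  rw [coeff_lagrangeRemainder, filter_true_of_mem fun i hi ↦ ((mem_Ico.1 hi).2.trans hk).le]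
  exact (abs_sub _ _).trans (by linarith)

/-- The Euler operator `V ↦ X * V' - c * V`, which multiplies the coefficient of `X ^ k` by
`k - c`. -/
noncomputable def eulerOp (c : ℝ) : ℝ⟦X⟧ →ₗ[ℝ] ℝ⟦X⟧ :=
  LinearMap.mulLeft ℝ X ∘ₗ (derivative ℝ).toLinearMap - c • LinearMap.id

lemma eulerOp_apply (c : ℝ) (V : ℝ⟦X⟧) : eulerOp c V = X * derivative ℝ V - c • V := rfl

lemma coeff_eulerOp (c : ℝ) (V : ℝ⟦X⟧) (k : ℕ) :
    coeff k (eulerOp c V) = (k - c) * coeff k V := by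
  rw [eulerOp_apply, map_sub, coeff_smul, smul_eq_mul, sub_mul]
  rcases k with _ | k
  · simp
  · rw [coeff_succ_X_mul, coeff_derivative, Nat.cast_succ, mul_comm]

lemma eulerOp_X_pow (c : ℝ) (k : ℕ) : eulerOp c (X ^ k) = (k - c) • X ^ k := by
  ext j
  rw [coeff_eulerOp, coeff_smul, smul_eq_mul, coeff_X_pow]
  split_ifs with h
  · rw [h]
  · rw [mul_zero, mul_zero]

lemma oneSubPow_sub_one (β : ℝ) : oneSubPow (β - 1) = oneSubPow (-1) * oneSubPow β := by
  linear_combination oneSubPow (-1) * one_sub_X_mul_oneSubPow β -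
    oneSubPow (β - 1) * one_sub_X_mul_oneSubPow_neg_one

lemma eulerOp_mul_oneSubPow_sub_one (c : ℝ) (V : ℝ⟦X⟧) (β : ℝ) :
    eulerOp c (V * oneSubPow (β - 1)) =
      (eulerOp c V + C (1 - β) * X * oneSubPow (-1) * V) * (oneSubPow (-1) * oneSubPow β) := by
  rw [eulerOp_apply, eulerOp_apply, Derivation.leibniz, derivative_oneSubPow,
    oneSubPow_sub_one (β - 1), oneSubPow_sub_one β, neg_sub]
  simp only [smul_eq_C_mul, smul_eq_mul]
  ring

lemma eulerOp_X_pow_mul_oneSubPow (hm : 1 ≤ m) (i : ℕ) :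
    eulerOp m (X ^ i * oneSubPow (i * (1 / m) - 1)) = ((m : ℝ) - i) •
      ((C (1 / (m : ℝ)) * X * oneSubPow (-1) ^ 2 - oneSubPow (-1)) *
        (X ^ i * oneSubPow (i * (1 / m)))) := by
  have hm0 : (m : ℝ) ≠ 0 := Nat.cast_ne_zero.2 (by omega)
  have hC : C (1 - (i : ℝ) * (1 / m)) = C ((m : ℝ) - i) * C (1 / (m : ℝ)) := by
    rw [← map_mul]
    congr 1
    field_simp
  rw [eulerOp_mul_oneSubPow_sub_one, eulerOp_X_pow, ← neg_sub, hC, smul_eq_C_mul, smul_eq_C_mul,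
    map_neg]
  ring

lemma eulerOp_negLogOneSub_sub_one_mul (c : ℝ) :
    eulerOp c ((negLogOneSub - 1) * oneSubPow (-1)) =
      X * oneSubPow (-1) ^ 2 * negLogOneSub - c • ((negLogOneSub - 1) * oneSubPow (-1)) := by
  have hderiv : derivative ℝ (oneSubPow (-1)) = oneSubPow (-1) ^ 2 := by
    rw [derivative_oneSubPow, neg_neg, one_smul, oneSubPow_sub_one, sq]
  have hone : derivative ℝ (1 : ℝ⟦X⟧) = 0 := Derivation.map_one_eq_zero _
  rw [eulerOp_apply, Derivation.leibniz, map_sub, derivative_negLogOneSub, hderiv, hone,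
    smul_eq_mul, smul_eq_mul]
  ring

lemma oneSubPow_neg_one_sub_sum_X_pow (m : ℕ) :
    oneSubPow (-1) - ∑ j ∈ Icc 1 m, (X : ℝ⟦X⟧) ^ (m - j) = oneSubPow (-1) * X ^ m := by
  have hgeom : (1 - X) * ∑ j ∈ Icc 1 m, (X : ℝ⟦X⟧) ^ (m - j) = 1 - X ^ m := by
    rw [← mul_neg_geom_sum, ← sum_range_reflect, ← Ico_add_one_right_eq_Icc, sum_Ico_eq_sum_range]
    simp only [Nat.add_sub_cancel, Nat.sub_sub]
  linear_combination (-oneSubPow (-1)) * hgeom +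
    (∑ j ∈ Icc 1 m, (X : ℝ⟦X⟧) ^ (m - j)) * one_sub_X_mul_oneSubPow_neg_one

lemma eulerOp_phaseRemainder (hm : 1 ≤ m) :
    eulerOp m (phaseRemainder m) = oneSubPow (-1) * (X ^ m - lagrangeRemainder m) +
      (1 / (m : ℝ)) • (X * (oneSubPow (-1) * (oneSubPow (-1) * lagrangeRemainder m))) := by
  have hm0 : (m : ℝ) ≠ 0 := Nat.cast_ne_zero.2 (by omega)
  have hpow : ∑ j ∈ Icc 1 m, (1 / (j : ℝ)) • eulerOp m (X ^ (m - j)) =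
      -∑ j ∈ Icc 1 m, X ^ (m - j) := by
    rw [← sum_neg_distrib]
    refine sum_congr rfl fun j hj ↦ ?_
    have hj := mem_Icc.1 hj
    have hj0 : (j : ℝ) ≠ 0 := Nat.cast_ne_zero.2 (by omega)
    rw [eulerOp_X_pow, Nat.cast_sub hj.2, sub_sub_cancel_left, smul_smul, mul_neg,
      one_div_mul_cancel hj0, neg_one_smul]
  have hbinom : ∑ i ∈ Ico 1 m, dcoef m i • eulerOp m (X ^ i * oneSubPow (i * (1 / m) - 1)) =
      (C (1 / (m : ℝ)) * X * oneSubPow (-1) ^ 2 - oneSubPow (-1)) *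
        (negLogOneSub - lagrangeRemainder m) := by
    rw [lagrangeRemainder, sub_sub_cancel, mul_sum]
    refine sum_congr rfl fun i hi ↦ ?_
    have hi := mem_Ico.1 hi
    have hmi : (m : ℝ) - i ≠ 0 := sub_ne_zero.2 (by exact_mod_cast hi.2.ne')
    rw [eulerOp_X_pow_mul_oneSubPow hm, dcoef_eq_lagrangeCoeff_div hi.1 hi.2, smul_smul,
      div_mul_cancel₀ _ hmi, mul_smul_comm]
  have hC : C (1 / (m : ℝ)) * C (m : ℝ) = 1 := by
    rw [← map_mul, one_div_mul_cancel hm0, map_one]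
  rw [phaseRemainder, map_sub, map_add, map_sum, map_sum]
  simp only [map_smul]
  rw [eulerOp_negLogOneSub_sub_one_mul, hpow, hbinom, smul_eq_C_mul, smul_eq_C_mul, smul_eq_C_mul]
  linear_combination oneSubPow_neg_one_sub_sum_X_pow m -
    (negLogOneSub - 1) * oneSubPow (-1) * hC

lemma natCast_sub_mul_coeff_phaseRemainder (hm : 1 ≤ m) (k : ℕ) :
    (k - m) * coeff k (phaseRemainder m) =
      ∑ j ∈ range (k + 1), coeff j (X ^ m - lagrangeRemainder m) +
        1 / m * ∑ j ∈ range k, ∑ i ∈ range (j + 1), coeff i (lagrangeRemainder m) := by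
  rw [← coeff_eulerOp, eulerOp_phaseRemainder hm, map_add, coeff_oneSubPow_neg_one_mul, coeff_smul,
    smul_eq_mul]
  congr 2
  rcases k with _ | k
  · simp
  · simp only [coeff_succ_X_mul, coeff_oneSubPow_neg_one_mul]

lemma coeff_phaseRemainder_of_lt (hk : k < m) : coeff k (phaseRemainder m) = 0 := by
  have h := natCast_sub_mul_coeff_phaseRemainder (Nat.one_le_of_lt hk) k
  have hX : ∑ j ∈ range (k + 1), coeff j (X ^ m - lagrangeRemainder m) = 0 :=
    sum_eq_zero fun j hj ↦ by
      have hj := mem_range.1 hj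
      rw [map_sub, coeff_X_pow, if_neg (by omega), coeff_lagrangeRemainder_of_lt (by omega),
        sub_self]
  have hL : ∑ j ∈ range k, ∑ i ∈ range (j + 1), coeff i (lagrangeRemainder m) = 0 :=
    sum_eq_zero fun j hj ↦ sum_eq_zero fun i hi ↦ by
      have hj := mem_range.1 hj
      have hi := mem_range.1 hi
      exact coeff_lagrangeRemainder_of_lt (by omega)
  rw [hX, hL, mul_zero, add_zero] at h
  exact (mul_eq_zero.1 h).resolve_left (sub_ne_zero.2 (by exact_mod_cast hk.ne))

lemma abs_sum_range_le_of_eq_zero {f : ℕ → ℝ} {B : ℝ} (hmk : m ≤ k) (hlow : ∀ j < m, f j = 0)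
    (hhigh : ∀ j, m ≤ j → j < k → |f j| ≤ B) : |∑ j ∈ range k, f j| ≤ (k - m) * B := by
  rw [← sum_range_add_sum_Ico f hmk, sum_eq_zero fun j hj ↦ hlow j (mem_range.1 hj), zero_add]
  refine (abs_sum_le_sum_abs _ _).trans ((sum_le_card_nsmul _ _ B fun j hj ↦ ?_).trans_eq ?_)
  · exact hhigh j (mem_Ico.1 hj).1 (mem_Ico.1 hj).2
  · rw [Nat.card_Ico, nsmul_eq_mul, Nat.cast_sub hmk]

lemma abs_sum_coeff_X_pow_sub_lagrangeRemainder_le (hm : 1 ≤ m) (hk : m ≤ k) :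
    |∑ j ∈ range (k + 1), coeff j (X ^ m - lagrangeRemainder m)| ≤ ((k : ℝ) - m) * 2 := by
  have h := abs_sum_range_le_of_eq_zero (f := fun j ↦ coeff j (X ^ m - lagrangeRemainder m))
    (B := 2) (Nat.add_le_add_right hk 1) (fun j hj ↦ ?_) (fun j hj _ ↦ ?_)
  · rwa [Nat.cast_succ, Nat.cast_succ, add_sub_add_right_eq_sub] at h
  · rw [map_sub, coeff_X_pow]
    rcases (Nat.lt_succ_iff.1 hj).lt_or_eq with hj | rfl
    · rw [if_neg hj.ne, coeff_lagrangeRemainder_of_lt hj, sub_self]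
    · rw [if_pos rfl, coeff_lagrangeRemainder_self hm, sub_self]
  · rw [map_sub, coeff_X_pow, if_neg (by omega), zero_sub, abs_neg]
    exact abs_coeff_lagrangeRemainder_le hm (by omega)

lemma abs_sum_sum_coeff_lagrangeRemainder_le (hm : 1 ≤ m) (hk : m ≤ k) :
    |∑ j ∈ range k, ∑ i ∈ range (j + 1), coeff i (lagrangeRemainder m)| ≤
      ((k : ℝ) - m) * ((k - m) * 2) := by
  refine abs_sum_range_le_of_eq_zero hk (fun j hj ↦ ?_) fun j hj hjk ↦ ?_
  · exact sum_eq_zero fun i hi ↦ coeff_lagrangeRemainder_of_lt (by have := mem_range.1 hi; omega)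
  · have hjk : ((j + 1 : ℕ) : ℝ) ≤ k := mod_cast hjk
    refine (abs_sum_range_le_of_eq_zero (hj.trans (Nat.le_succ j))
      (fun i hi ↦ coeff_lagrangeRemainder_of_lt hi)
      fun i hi _ ↦ abs_coeff_lagrangeRemainder_le hm hi).trans ?_
    gcongr

lemma abs_coeff_phaseRemainder_le (hm : 1 ≤ m) (hk : m < k) :
    |coeff k (phaseRemainder m)| ≤ 2 * (k / m) := by
  have hm0 : (0 : ℝ) < m := mod_cast hm
  have hkm : (0 : ℝ) < k - m := sub_pos.2 (mod_cast hk)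
  refine le_of_mul_le_mul_left ?_ hkm
  calc (k - m) * |coeff k (phaseRemainder m)|
      = |(k - m) * coeff k (phaseRemainder m)| := by rw [abs_mul, abs_of_pos hkm]
    _ ≤ (k - m) * 2 + 1 / m * ((k - m) * ((k - m) * 2)) := by
      rw [natCast_sub_mul_coeff_phaseRemainder hm]
      refine (abs_add_le _ _).trans ?_
      rw [abs_mul, abs_of_pos (one_div_pos.2 hm0)]
      gcongr
      · exact abs_sum_coeff_X_pow_sub_lagrangeRemainder_le hm hk.le
      · exact abs_sum_sum_coeff_lagrangeRemainder_le hm hk.le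
    _ = (k - m) * (2 * (k / m)) := by
      field_simp
      ring

/-- A linear functional on power series. On `phaseRemainder m`, which starts in degree `m`, it
computes the leading coefficient, and it vanishes on each binomial term of the definition of
`phaseRemainder`. -/
noncomputable def leadingFunctional (m : ℕ) : ℝ⟦X⟧ →ₗ[ℝ] ℝ :=
  coeff m - (1 / (m : ℝ)) • ∑ k ∈ range m, coeff k

lemma leadingFunctional_apply (m : ℕ) (V : ℝ⟦X⟧) :
    leadingFunctional m V = coeff m V - 1 / m * ∑ k ∈ range m, coeff k V := by
  simp only [leadingFunctional, LinearMap.sub_apply, LinearMap.smul_apply, LinearMap.sum_apply,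
    smul_eq_mul]

lemma leadingFunctional_X_pow (hk : k < m) : leadingFunctional m (X ^ k) = -(1 / m) := by
  simp only [leadingFunctional_apply, coeff_X_pow, if_neg hk.ne', sum_ite_eq', mem_range, if_pos hk,
    mul_one, zero_sub]

lemma leadingFunctional_X_pow_mul_oneSubPow {i : ℕ} (hi : i < m) :
    leadingFunctional m (X ^ i * oneSubPow (i * (1 / m) - 1)) = 0 := by
  obtain ⟨l, rfl⟩ := Nat.exists_eq_add_of_lt hi
  set β : ℝ := i * (1 / (i + l + 1 : ℕ)) - 1 with hβ
  have hm0 : ((i + l + 1 : ℕ) : ℝ) ≠ 0 := Nat.cast_ne_zero.2 (Nat.succ_ne_zero _)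
  have hsum : ∑ k ∈ range (i + l + 1), coeff k (X ^ i * oneSubPow β) =
      oneSubPowCoeff (β - 1) l := by
    rw [← coeff_oneSubPow_neg_one_mul, mul_left_comm, ← oneSubPow_sub_one, add_comm i,
      coeff_X_pow_mul, oneSubPow, coeff_mk]
  have hcoeff : (l + 1) * oneSubPowCoeff β (l + 1) =
      (l + 1) / (i + l + 1 : ℕ) * oneSubPowCoeff (β - 1) l := by
    rw [succ_mul_oneSubPowCoeff_succ, hβ]
    congr 1
    field_simp
    push_cast
    ring
  rw [leadingFunctional_apply, hsum, add_assoc, add_comm i, coeff_X_pow_mul, oneSubPow, coeff_mk,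
    ← mul_right_inj' (Nat.cast_add_one_ne_zero (R := ℝ) l), mul_sub, hcoeff, add_comm (l + 1),
    ← add_assoc]
  ring

lemma leadingFunctional_negLogOneSub_sub_one_mul (hm : 1 ≤ m) :
    leadingFunctional m ((negLogOneSub - 1) * oneSubPow (-1)) = 1 := by
  obtain ⟨q, rfl⟩ := Nat.exists_eq_add_of_le' hm
  have heuler := congrArg (coeff (q + 1)) (eulerOp_negLogOneSub_sub_one_mul 0)
  rw [coeff_eulerOp, sub_zero, zero_smul, sub_zero, sq, mul_assoc, mul_assoc,
    coeff_succ_X_mul, coeff_oneSubPow_neg_one_mul] at heuler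
  have hsum : ∑ k ∈ range (q + 1), coeff k (oneSubPow (-1) * negLogOneSub) =
      ∑ k ∈ range (q + 1), coeff k ((negLogOneSub - 1) * oneSubPow (-1)) + (q + 1 : ℕ) := by
    have hcard : ((q + 1 : ℕ) : ℝ) = ∑ _k ∈ range (q + 1), (1 : ℝ) := by
      rw [sum_const, card_range, nsmul_one]
    rw [hcard, ← sum_add_distrib]
    refine sum_congr rfl fun k _ ↦ ?_
    rw [sub_mul, one_mul, map_sub, mul_comm negLogOneSub, oneSubPow, coeff_mk,
      oneSubPowCoeff_neg_one, sub_add_cancel]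
  rw [leadingFunctional_apply, ← mul_right_inj' (Nat.cast_ne_zero.2 q.succ_ne_zero : (_ : ℝ) ≠ 0),
    mul_sub, heuler, hsum]
  field_simp
  ring

lemma coeff_phaseRemainder_self (hm : 1 ≤ m) : coeff m (phaseRemainder m) = dcoef m m := by
  have hlead : leadingFunctional m (phaseRemainder m) = coeff m (phaseRemainder m) := by
    rw [leadingFunctional_apply, sum_eq_zero fun k hk ↦ coeff_phaseRemainder_of_lt (mem_range.1 hk),
      mul_zero, sub_zero]
  have hpow : ∑ j ∈ Icc 1 m, 1 / (j : ℝ) * leadingFunctional m (X ^ (m - j)) =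
      -(1 / m) * (1 + ∑ j ∈ Icc 2 m, 1 / (j : ℝ)) := by
    have hsplit : ∑ j ∈ Icc 1 m, 1 / (j : ℝ) = 1 + ∑ j ∈ Icc 2 m, 1 / (j : ℝ) := by
      rw [← add_sum_Ioc_eq_sum_Icc hm, Nat.cast_one, one_div_one]
      rfl
    rw [← hsplit, mul_sum]
    refine sum_congr rfl fun j hj ↦ ?_
    have hj := mem_Icc.1 hj
    rw [leadingFunctional_X_pow (by omega), mul_comm]
  have hbinom : ∑ i ∈ Ico 1 m,
      dcoef m i * leadingFunctional m (X ^ i * oneSubPow (i * (1 / m) - 1)) = 0 :=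
    sum_eq_zero fun i hi ↦ by
      rw [leadingFunctional_X_pow_mul_oneSubPow (mem_Ico.1 hi).2, mul_zero]
  rw [← hlead, phaseRemainder, map_sub, map_add, map_sum, map_sum]
  simp only [map_smul, smul_eq_mul]
  rw [leadingFunctional_negLogOneSub_sub_one_mul hm, hpow, hbinom, dcoef, if_pos rfl]
  ring

end PhaseRemainder

section PhaseExpansion

open Finset PowerSeries

variable {m : ℕ} {x y : ℝ}

lemma choose_mul_neg_one_pow (β : ℝ) (k : ℕ) :
    Ring.choose β k * (-1) ^ k = oneSubPowCoeff β k := by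
  rw [Ring.choose_eq_smul, ← Polynomial.aeval_eq_smeval, Polynomial.aeval_def,
    Polynomial.eval₂_eq_eval_map, descPochhammer_map, descPochhammer_eval_eq_prod_range,
    oneSubPowCoeff, prod_div_distrib, ← prod_range_add_one_eq_factorial, pow_eq_prod_const,
    smul_eq_mul, mul_assoc, ← prod_mul_distrib, inv_mul_eq_div, Nat.cast_prod]
  congr 1
  · exact prod_congr rfl fun _ _ ↦ by ring
  · exact prod_congr rfl fun _ _ ↦ Nat.cast_succ _

lemma hasValueAt_oneSubPow (β : ℝ) (hy : |y| < 1) :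
    HasValueAt (oneSubPow β) y ((1 - y) ^ β) := by
  have hmem : -y ∈ Metric.eball (0 : ℝ) 1 := by
    rwa [Metric.mem_eball, edist_zero_right, enorm_neg, ← ofReal_norm, Real.norm_eq_abs,
      ENNReal.ofReal_lt_one]
  have h := (one_add_rpow_hasFPowerSeriesOnBall_zero (a := β)).hasSum hmem
  rw [zero_add, ← sub_eq_add_neg] at h
  refine h.congr_fun fun k ↦ ?_
  rw [binomialSeries_apply, oneSubPow, coeff_mk, ← choose_mul_neg_one_pow, List.ofFn_const,
    List.prod_replicate, smul_eq_mul, neg_pow y, ← mul_assoc]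
  rfl

lemma hasValueAt_oneSubPow_neg_one (hy : |y| < 1) :
    HasValueAt (oneSubPow (-1)) y (1 - y)⁻¹ := by
  rw [← Real.rpow_neg_one]
  exact hasValueAt_oneSubPow (-1) hy

lemma hasValueAt_negLogOneSub (hy : |y| < 1) : HasValueAt negLogOneSub y (-log (1 - y)) := by
  have h := Real.hasSum_pow_div_log_of_abs_lt_one hy
  rw [HasValueAt, ← hasSum_nat_add_iff' 1]
  simpa [negLogOneSub, div_eq_inv_mul] using h

lemma hasValueAt_phaseRemainder (m : ℕ) (hy : |y| < 1) :
    HasValueAt (phaseRemainder m) y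
      (∑ j ∈ Icc 1 m, 1 / (j : ℝ) * y ^ (m - j) +
        1 / (m : ℝ) * ((-log (1 - y) - 1) * (1 - y)⁻¹) -
        ∑ i ∈ Ico 1 m, dcoef m i * (y ^ i * (1 - y) ^ (i * (1 / (m : ℝ)) - 1))) :=
  ((HasValueAt.sum _ fun _ _ ↦ (HasValueAt.X_pow _).smul _).add
    ((((hasValueAt_negLogOneSub hy).sub .one).mul (hasValueAt_oneSubPow_neg_one hy)).smul _)).sub
    (HasValueAt.sum _ fun _ _ ↦ ((HasValueAt.X_pow _).mul (hasValueAt_oneSubPow _ hy)).smul _)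

lemma HasValueAt.abs_sub_dcoef_mul_pow_le {s : ℝ} (hs : HasValueAt (phaseRemainder m) y s)
    (hm : 1 ≤ m) (hy0 : 0 < y) (hy1 : y < 1) (hv : (1 - y)⁻¹ ≤ m + 1) :
    |s - dcoef m m * y ^ m| ≤ y ^ m * (6 * (y / (1 - y))) := by
  have h1y : 0 < 1 - y := sub_pos.2 hy1
  have hlow : ∑ k ∈ range (m + 1), coeff k (phaseRemainder m) * y ^ k = dcoef m m * y ^ m := by
    rw [sum_range_succ, coeff_phaseRemainder_self hm, sum_eq_zero fun k hk ↦ by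
      rw [coeff_phaseRemainder_of_lt (mem_range.1 hk), zero_mul], zero_add]
  have htail : HasSum (fun q ↦ coeff (q + (m + 1)) (phaseRemainder m) * y ^ (q + (m + 1)))
      (s - dcoef m m * y ^ m) := by
    rw [← hlow]
    exact (hasSum_nat_add_iff' (m + 1)).2 hs
  have hgeom : HasSum (fun q : ℕ ↦ 2 / m * y ^ (m + 1) * (q * y ^ q + (m + 1) * y ^ q))
      (2 / m * y ^ (m + 1) * (y / (1 - y) ^ 2 + (m + 1) * (1 - y)⁻¹)) :=
    ((hasSum_coe_mul_geometric_of_norm_lt_one (by rwa [norm_of_nonneg hy0.le])).add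
      ((hasSum_geometric_of_lt_one hy0.le hy1).mul_left _)).mul_left _
  have hterm (q : ℕ) : ‖coeff (q + (m + 1)) (phaseRemainder m) * y ^ (q + (m + 1))‖ ≤
      2 / m * y ^ (m + 1) * (q * y ^ q + (m + 1) * y ^ q) := by
    rw [norm_mul, norm_pow, norm_of_nonneg hy0.le]
    calc |coeff (q + (m + 1)) (phaseRemainder m)| * y ^ (q + (m + 1))
        ≤ 2 * ((q + (m + 1) : ℕ) / m) * y ^ (q + (m + 1)) := by
          gcongr
          exact abs_coeff_phaseRemainder_le hm (by omega)
      _ = 2 / m * y ^ (m + 1) * (q * y ^ q + (m + 1) * y ^ q) := by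
          push_cast
          ring
  have hV : y / (1 - y) = (1 - y)⁻¹ - 1 := by
    field_simp
    ring
  calc |s - dcoef m m * y ^ m|
      ≤ 2 / m * y ^ (m + 1) * (y / (1 - y) ^ 2 + (m + 1) * (1 - y)⁻¹) := by
        rw [← htail.tsum_eq]
        exact tsum_of_norm_bounded hgeom hterm
    _ = y ^ m * (2 / m * (y / (1 - y) + (m + 1)) * (y / (1 - y))) := by
        field_simp
        ring
    _ ≤ y ^ m * (2 / m * (3 * m) * (y / (1 - y))) := by
        have hm1 : (1 : ℝ) ≤ m := mod_cast hm
        gcongr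
        linarith
    _ = y ^ m * (6 * (y / (1 - y))) := by
        field_simp
        ring

/-- The main term of `-log (permProb n m * √(2 * π * n * m))` at `x = n`. -/
noncomputable def mainExponent (m : ℕ) (x : ℝ) : ℝ :=
  x / m * log x - x / m - ∑ i ∈ Icc 1 m, dcoef m i * x ^ (1 - (i : ℝ) / m)

/-- The equation satisfied by the reciprocal `y` of the radius of the circle on which the saddle
point method is run. It differs from the exact saddle point equation
`∑ j ∈ [1, m], y⁻¹ ^ j = x` only by a term `1 / (1 - y)`. -/
structure IsSaddlePoint (m : ℕ) (x y : ℝ) : Prop where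
  pos : 0 < y
  lt_one : y < 1
  eq_one : y ^ m * (1 - y) * x = 1

namespace IsSaddlePoint

variable (h : IsSaddlePoint m x y)
include h

lemma one_sub_pos : 0 < 1 - y := sub_pos.2 h.lt_one

lemma eq_inv_mul_inv : x = (y ^ m)⁻¹ * (1 - y)⁻¹ := by
  rw [← mul_inv]
  exact eq_inv_of_mul_eq_one_right h.eq_one

lemma log_eq : log x = -(m * log y) - log (1 - y) := by
  have hy := (inv_pos.2 (pow_pos h.pos m)).ne'
  rw [h.eq_inv_mul_inv, log_mul hy (inv_pos.2 h.one_sub_pos).ne', log_inv, log_inv, log_pow]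
  ring

lemma truncLog_inv : truncLog m y⁻¹ = (y ^ m)⁻¹ * ∑ j ∈ Icc 1 m, 1 / (j : ℝ) * y ^ (m - j) := by
  rw [truncLog, mul_sum, range_eq_Ico, sum_Ico_add' (fun j : ℕ ↦ y⁻¹ ^ j / (j : ℝ)) 0 m 1, zero_add,
    Ico_add_one_right_eq_Icc]
  refine sum_congr rfl fun j hj ↦ ?_
  have hy := h.pos.ne'
  rw [← pow_sub_mul_pow y (mem_Icc.1 hj).2, inv_pow]
  field_simp

lemma rpow_one_sub_div (hm : 1 ≤ m) (i : ℕ) :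
    x ^ (1 - (i : ℝ) / m) = (y ^ m)⁻¹ * (y ^ i * (1 - y) ^ (i * (1 / (m : ℝ)) - 1)) := by
  have hm0 : (m : ℝ) ≠ 0 := Nat.cast_ne_zero.2 (by omega)
  have hx : 0 < x := by
    rw [h.eq_inv_mul_inv]
    exact mul_pos (inv_pos.2 (pow_pos h.pos m)) (inv_pos.2 h.one_sub_pos)
  rw [← rpow_natCast y m, ← rpow_natCast y i, ← rpow_neg h.pos.le, rpow_def_of_pos hx,
    rpow_def_of_pos h.pos, rpow_def_of_pos h.pos, rpow_def_of_pos h.one_sub_pos, ← exp_add,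
    ← exp_add, h.log_eq]
  congr 1
  field_simp
  ring

lemma sum_dcoef_mul_rpow (hm : 1 ≤ m) :
    ∑ i ∈ Icc 1 m, dcoef m i * x ^ (1 - (i : ℝ) / m) = dcoef m m +
      (y ^ m)⁻¹ * ∑ i ∈ Ico 1 m, dcoef m i * (y ^ i * (1 - y) ^ (i * (1 / (m : ℝ)) - 1)) := by
  have hm0 : (m : ℝ) ≠ 0 := Nat.cast_ne_zero.2 (by omega)
  rw [← Ico_insert_right hm, sum_insert right_notMem_Ico, div_self hm0, sub_self, rpow_zero,
    mul_one, mul_sum]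
  simp only [h.rpow_one_sub_div hm, mul_left_comm]

lemma truncLog_add_mainExponent_eq {s : ℝ} (hm : 1 ≤ m)
    (hs : HasValueAt (phaseRemainder m) y s) :
    truncLog m y⁻¹ + x * log y + mainExponent m x = (y ^ m)⁻¹ * (s - dcoef m m * y ^ m) := by
  have hm0 : (m : ℝ) ≠ 0 := Nat.cast_ne_zero.2 (by omega)
  have hym := (pow_pos h.pos m).ne'
  have h1y := h.one_sub_pos.ne'
  have hval := hs.unique (hasValueAt_phaseRemainder m (by rw [abs_of_pos h.pos]; exact h.lt_one))
  have hlog : x * log y + x / m * log x - x / m =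
      (y ^ m)⁻¹ * (1 / (m : ℝ) * ((-log (1 - y) - 1) * (1 - y)⁻¹)) := by
    rw [h.log_eq, h.eq_inv_mul_inv]
    field_simp
    ring
  rw [hval, h.truncLog_inv, mainExponent, h.sum_dcoef_mul_rpow hm]
  linear_combination hlog + dcoef m m * inv_mul_cancel₀ hym

lemma abs_truncLog_add_mainExponent_le (hm : 1 ≤ m) (hv : (1 - y)⁻¹ ≤ m + 1) :
    |truncLog m y⁻¹ + x * log y + mainExponent m x| ≤ 6 * (y / (1 - y)) := by
  have hs := hasValueAt_phaseRemainder m (by rw [abs_of_pos h.pos]; exact h.lt_one)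
  have hym := pow_pos h.pos m
  rw [h.truncLog_add_mainExponent_eq hm hs, abs_mul, abs_of_pos (inv_pos.2 hym),
    inv_mul_le_iff₀ hym]
  exact hs.abs_sub_dcoef_mul_pow_le hm h.pos h.lt_one hv

end IsSaddlePoint

end PhaseExpansion

section CauchyIntegral

open Finset

lemma integral_exp_int_mul_I (k n : ℕ) :
    ∫ θ in -π..π, Complex.exp (((k : ℂ) - n) * Complex.I * θ) =
      if k = n then 2 * (π : ℂ) else 0 := by
  split_ifs with h
  · simp [h, two_mul]
  · have hne : ((k : ℂ) - n) * Complex.I ≠ 0 :=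
      mul_ne_zero (sub_ne_zero.2 (mod_cast h)) Complex.I_ne_zero
    have hper : Complex.exp (((k : ℂ) - n) * Complex.I * (π : ℝ)) =
        Complex.exp (((k : ℂ) - n) * Complex.I * ((-π : ℝ) : ℂ)) :=
      Complex.exp_eq_exp_iff_exists_int.2 ⟨k - n, by push_cast; ring⟩
    rw [integral_exp_mul_complex hne, hper, sub_self, zero_div]

lemma integral_hasSum_mul_exp_int_mul_I {c : ℕ → ℂ} (hc : Summable fun k ↦ ‖c k‖) {f : ℝ → ℂ}
    (n : ℕ) (hf : ∀ θ : ℝ, HasSum (fun k : ℕ ↦ c k * Complex.exp (((k : ℂ) - n) * Complex.I * θ))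
      (f θ)) :
    ∫ θ in -π..π, f θ = 2 * π * c n := by
  have hnorm (k : ℕ) (θ : ℝ) :
      ‖c k * Complex.exp (((k : ℂ) - n) * Complex.I * θ)‖ ≤ ‖c k‖ := by
    have hexp : ‖Complex.exp (((k : ℂ) - n) * Complex.I * θ)‖ = 1 := by simp [Complex.norm_exp]
    rw [norm_mul, hexp, mul_one]
  have hintegral := intervalIntegral.hasSum_integral_of_dominated_convergence (a := -π) (b := π)
    (μ := MeasureTheory.volume) (fun k _ ↦ ‖c k‖)
    (fun k ↦ (by fun_prop : Continuous fun θ : ℝ ↦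
      c k * Complex.exp (((k : ℂ) - n) * Complex.I * θ)).aestronglyMeasurable)
    (fun k ↦ .of_forall fun θ _ ↦ hnorm k θ) (.of_forall fun _ _ ↦ hc)
    intervalIntegrable_const (.of_forall fun θ _ ↦ hf θ)
  refine hintegral.unique ((hasSum_ite_eq n (2 * π * c n)).congr_fun fun k ↦ ?_)
  rw [intervalIntegral.integral_const_mul, integral_exp_int_mul_I]
  split_ifs with h
  · rw [h, mul_comm]
  · rw [mul_zero]

variable (m n : ℕ) (x θ : ℝ)

/-- The exponent of the integrand in Cauchy's formula for the coefficient of index `n` of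
`exp (truncLog m)` on the circle of radius `x`, normalised to vanish at `θ = 0`. -/
noncomputable def circlePhase : ℂ :=
  truncLog m (x * Complex.exp (θ * Complex.I)) - truncLog m (x : ℂ) - n * θ * Complex.I

lemma continuous_circlePhase : Continuous (circlePhase m n x) := by
  unfold circlePhase truncLog
  fun_prop

lemma mul_exp_mul_I_pow (k : ℕ) :
    ((x : ℂ) * Complex.exp (θ * Complex.I)) ^ k =
      (x ^ k : ℝ) * Complex.exp ((k * θ : ℝ) * Complex.I) := by
  rw [mul_pow, ← Complex.exp_nat_mul]
  push_cast
  rw [mul_assoc (k : ℂ)]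

lemma circlePhase_eq_sum :
    circlePhase m n x θ =
      ∑ j ∈ range m, ((x ^ (j + 1) / (j + 1 : ℕ) : ℝ) : ℂ) *
        (Complex.exp (((j + 1 : ℕ) * θ : ℝ) * Complex.I) - 1) - (n * θ : ℝ) * Complex.I := by
  rw [circlePhase, truncLog, truncLog, ← sum_sub_distrib, Complex.ofReal_mul n,
    Complex.ofReal_natCast n]
  congr 1
  refine sum_congr rfl fun j _ ↦ ?_
  rw [mul_exp_mul_I_pow]
  push_cast
  ring

lemma exp_circlePhase :
    Complex.exp (circlePhase m n x θ) =
      Complex.exp (truncLog m (x * Complex.exp (θ * Complex.I))) *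
        (Complex.exp (-truncLog m (x : ℂ)) * Complex.exp (-(n * θ * Complex.I))) := by
  rw [← Complex.exp_add, ← Complex.exp_add, circlePhase]
  ring_nf

lemma ofReal_truncLog : ((truncLog m x : ℝ) : ℂ) = truncLog m (x : ℂ) := by
  simp [truncLog]

variable {m} (hm : 1 ≤ m)
include hm

lemma hasSum_permProb_mul_pow (z : ℂ) :
    HasSum (fun k ↦ (permProb k m : ℂ) * z ^ k) (Complex.exp (truncLog m z)) :=
  HasSum.congr_fun (hasValueAt_friableSeries m z) fun k ↦ by rw [permProb_eq_coeff k hm]; rfl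

lemma integral_exp_circlePhase :
    ∫ θ in -π..π, Complex.exp (circlePhase m n x θ) =
      (2 * π * (permProb n m * x ^ n * exp (-truncLog m x)) : ℝ) := by
  have hsummable : Summable fun k ↦
      ‖(permProb k m : ℂ) * (x : ℂ) ^ k * Complex.exp (-truncLog m (x : ℂ))‖ :=
    ((hasSum_permProb_mul_pow hm x).mul_right _).summable.norm
  rw [integral_hasSum_mul_exp_int_mul_I hsummable n fun θ ↦ ?_]
  · rw [← ofReal_truncLog]
    push_cast
    rfl
  · rw [exp_circlePhase]
    refine ((hasSum_permProb_mul_pow hm _).mul_right _).congr_fun fun k ↦ ?_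
    rw [mul_pow, ← Complex.exp_nat_mul,
      show ((k : ℂ) - n) * Complex.I * θ = k * (θ * Complex.I) + -(n * θ * Complex.I) by ring,
      Complex.exp_add]
    ring

end CauchyIntegral

section LocalLimit

open MeasureTheory

lemma norm_cexp_sub_cexp_le {w z : ℂ} {c : ℝ} (hw : w.re ≤ c) (hz : z.re ≤ c) :
    ‖Complex.exp w - Complex.exp z‖ ≤ exp c * ‖w - z‖ := by
  refine Convex.norm_image_sub_le_of_norm_deriv_le (fun _ _ ↦ Complex.differentiable_exp _)
    (fun ζ hζ ↦ ?_) (convex_halfSpace_re_le c) hz hw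
  rw [Complex.deriv_exp, Complex.norm_exp]
  exact exp_le_exp.2 hζ

lemma pow_mul_exp_neg_sq_le {k : ℕ} (hk : k ≤ 3) {t : ℝ} (ht : 0 ≤ t) :
    t ^ k * exp (-t ^ 2) ≤ 2 ^ k * exp (-t ^ 2 / 2) := by
  have hlin : t ≤ 2 * exp (t ^ 2 / 6) := by
    nlinarith [add_one_le_exp (t ^ 2 / 6), sq_nonneg (t - 3 / 2)]
  have hk3 : (k : ℝ) ≤ 3 := mod_cast hk
  calc t ^ k * exp (-t ^ 2) ≤ (2 * exp (t ^ 2 / 6)) ^ k * exp (-t ^ 2) := by gcongr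
    _ = 2 ^ k * exp (k * (t ^ 2 / 6) - t ^ 2) := by
      rw [mul_pow, ← exp_nat_mul, mul_assoc, ← exp_add, sub_eq_add_neg]
    _ ≤ 2 ^ k * exp (-t ^ 2 / 2) := by
      gcongr
      nlinarith [sq_nonneg t]

variable {N r : ℝ} (hr : 0 < r) (hrN : r ^ 2 ≤ N / 2)
include hr hrN

lemma exp_neg_mul_sq_le_of_le_abs {δ θ : ℝ} (hδ : 0 < δ) (hθ : δ ≤ |θ|) :
    exp (-(N / 2) * θ ^ 2) ≤ 2 / (δ * r) * exp (-(r ^ 2 / 2) * θ ^ 2) := by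
  have ht := pow_mul_exp_neg_sq_le (show 1 ≤ 3 by norm_num) (by positivity : 0 ≤ r * |θ|)
  rw [pow_one, pow_one, mul_pow, sq_abs] at ht
  calc exp (-(N / 2) * θ ^ 2) ≤ exp (-(r ^ 2 * θ ^ 2)) := by
        gcongr
        nlinarith [mul_le_mul_of_nonneg_right hrN (sq_nonneg θ), mul_nonneg (sq_nonneg r)
          (sq_nonneg θ)]
    _ ≤ |θ| / δ * exp (-(r ^ 2 * θ ^ 2)) :=
        le_mul_of_one_le_left (exp_pos _).le ((one_le_div hδ).2 hθ)
    _ = 1 / (δ * r) * (r * |θ| * exp (-(r ^ 2 * θ ^ 2))) := by field_simp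
    _ ≤ 1 / (δ * r) * (2 * exp (-(r ^ 2 * θ ^ 2) / 2)) := by gcongr
    _ = 2 / (δ * r) * exp (-(r ^ 2 / 2) * θ ^ 2) := by ring_nf

variable {A B T : ℝ} (hA : 0 ≤ A) (hB : 0 ≤ B) (hT : 0 ≤ T)
include hA hB hT

lemma norm_cexp_sub_exp_neg_mul_sq_le {θ : ℝ} {w : ℂ}
    (hw : ‖w + (N / 2 * θ ^ 2 : ℝ)‖ ≤ A * |θ| + B * |θ| ^ 2 + T * |θ| ^ 3)
    (hre : w.re ≤ -(r ^ 2 * θ ^ 2)) :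
    ‖Complex.exp w - (exp (-(N / 2) * θ ^ 2) : ℝ)‖ ≤
      (2 * A / r + 4 * B / r ^ 2 + 8 * T / r ^ 3) * exp (-(r ^ 2 / 2) * θ ^ 2) := by
  have ht {k : ℕ} (hk : k ≤ 3) :
      (r * |θ|) ^ k * exp (-(r ^ 2 * θ ^ 2)) ≤ 2 ^ k * exp (-(r ^ 2 / 2) * θ ^ 2) := by
    convert pow_mul_exp_neg_sq_le hk (by positivity : 0 ≤ r * |θ|) using 3
    · rw [mul_pow, sq_abs]
    · rw [mul_pow, sq_abs]
      ring
  have hgauss : -(N / 2) * θ ^ 2 ≤ -(r ^ 2 * θ ^ 2) := by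
    rw [neg_mul, neg_le_neg_iff]
    exact mul_le_mul_of_nonneg_right hrN (sq_nonneg θ)
  calc ‖Complex.exp w - (exp (-(N / 2) * θ ^ 2) : ℝ)‖
      ≤ exp (-(r ^ 2 * θ ^ 2)) * ‖w - (-(N / 2) * θ ^ 2 : ℝ)‖ := by
        rw [Complex.ofReal_exp]
        exact norm_cexp_sub_cexp_le hre (by rwa [Complex.ofReal_re])
    _ ≤ exp (-(r ^ 2 * θ ^ 2)) * (A * |θ| + B * |θ| ^ 2 + T * |θ| ^ 3) := by
        gcongr
        rwa [neg_mul, Complex.ofReal_neg, sub_neg_eq_add]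
    _ = A / r * ((r * |θ|) ^ 1 * exp (-(r ^ 2 * θ ^ 2))) +
        B / r ^ 2 * ((r * |θ|) ^ 2 * exp (-(r ^ 2 * θ ^ 2))) +
        T / r ^ 3 * ((r * |θ|) ^ 3 * exp (-(r ^ 2 * θ ^ 2))) := by
        field_simp
    _ ≤ A / r * (2 ^ 1 * exp (-(r ^ 2 / 2) * θ ^ 2)) +
        B / r ^ 2 * (2 ^ 2 * exp (-(r ^ 2 / 2) * θ ^ 2)) +
        T / r ^ 3 * (2 ^ 3 * exp (-(r ^ 2 / 2) * θ ^ 2)) := by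
        gcongr ?_ * ?_ + ?_ * ?_ + ?_ * ?_
        exacts [ht (by norm_num), ht (by norm_num), ht (by norm_num)]
    _ = (2 * A / r + 4 * B / r ^ 2 + 8 * T / r ^ 3) * exp (-(r ^ 2 / 2) * θ ^ 2) := by ring

variable {δ ε : ℝ} (hδ : 0 < δ) (hδπ : δ ≤ π) (hε : 0 ≤ ε) {G : ℝ → ℂ}
  (hmajor : ∀ θ, |θ| ≤ δ →
    ‖G θ + (N / 2 * θ ^ 2 : ℝ)‖ ≤ A * |θ| + B * |θ| ^ 2 + T * |θ| ^ 3)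
  (hre : ∀ θ, |θ| ≤ δ → (G θ).re ≤ -(r ^ 2 * θ ^ 2))
  (hminor : ∀ θ, δ < |θ| → |θ| ≤ π → ‖Complex.exp (G θ)‖ ≤ ε)
include hδ hδπ hε hmajor hre hminor

lemma norm_indicator_cexp_sub_exp_neg_mul_sq_le (θ : ℝ) :
    ‖(Set.Ioc (-π) π).indicator (fun θ ↦ Complex.exp (G θ)) θ - (exp (-(N / 2) * θ ^ 2) : ℝ)‖ ≤
      (2 * A / r + 4 * B / r ^ 2 + 8 * T / r ^ 3 + 2 / (δ * r)) * exp (-(r ^ 2 / 2) * θ ^ 2) +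
        (Set.Ioc (-π) π).indicator (fun _ ↦ ε) θ := by
  have hX := exp_pos (-(r ^ 2 / 2) * θ ^ 2)
  have hK : 0 ≤ 2 * A / r + 4 * B / r ^ 2 + 8 * T / r ^ 3 := by positivity
  have hδr : 0 ≤ 2 / (δ * r) := by positivity
  have htail (h : δ ≤ |θ|) : ‖((exp (-(N / 2) * θ ^ 2) : ℝ) : ℂ)‖ ≤
      (2 * A / r + 4 * B / r ^ 2 + 8 * T / r ^ 3 + 2 / (δ * r)) *
        exp (-(r ^ 2 / 2) * θ ^ 2) := by
    rw [Complex.norm_real, norm_of_nonneg (exp_pos _).le]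
    refine (exp_neg_mul_sq_le_of_le_abs hr hrN hδ h).trans ?_
    gcongr
    exact le_add_of_nonneg_left hK
  by_cases hθ : θ ∈ Set.Ioc (-π) π
  · have hθπ : |θ| ≤ π := abs_le.2 ⟨hθ.1.le, hθ.2⟩
    rw [Set.indicator_of_mem hθ, Set.indicator_of_mem hθ]
    rcases le_or_gt |θ| δ with h | h
    · have hbound := norm_cexp_sub_exp_neg_mul_sq_le hr hrN hA hB hT (hmajor θ h) (hre θ h)
      rw [add_mul]
      linarith [mul_nonneg hδr hX.le]
    · rw [add_comm]
      exact (norm_sub_le _ _).trans (add_le_add (hminor θ h hθπ) (htail h.le))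
  · rw [Set.indicator_of_notMem hθ, Set.indicator_of_notMem hθ, zero_sub, norm_neg, add_zero]
    refine htail (hδπ.trans ?_)
    by_contra! h
    exact hθ ⟨(abs_lt.1 h).1, (abs_lt.1 h).2.le⟩

lemma norm_integral_cexp_sub_sqrt_le (hG : Continuous G) :
    ‖(∫ θ in -π..π, Complex.exp (G θ)) - (√(2 * π / N) : ℝ)‖ ≤
      (2 * A / r + 4 * B / r ^ 2 + 8 * T / r ^ 3 + 2 / (δ * r)) * √(2 * π / r ^ 2) +
        2 * π * ε := by
  have hπ : -π ≤ π := by linarith [pi_pos]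
  have hN : 0 < N := by nlinarith [pow_pos hr 2]
  have hgauss : ((√(2 * π / N) : ℝ) : ℂ) = ∫ θ : ℝ, ((exp (-(N / 2) * θ ^ 2) : ℝ) : ℂ) := by
    rw [integral_complex_ofReal, integral_gaussian, div_div_eq_mul_div, mul_comm]
  have hGauss : Integrable fun θ : ℝ ↦ exp (-(r ^ 2 / 2) * θ ^ 2) :=
    integrable_exp_neg_mul_sq (by positivity)
  have hNi : Integrable fun θ : ℝ ↦ ((exp (-(N / 2) * θ ^ 2) : ℝ) : ℂ) :=
    (integrable_exp_neg_mul_sq (by positivity)).ofReal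
  have hGi : Integrable ((Set.Ioc (-π) π).indicator fun θ ↦ Complex.exp (G θ)) := by
    rw [integrable_indicator_iff measurableSet_Ioc]
    exact (Continuous.integrableOn_Icc (by fun_prop)).mono_set Set.Ioc_subset_Icc_self
  have hεi : Integrable ((Set.Ioc (-π) π).indicator fun _ ↦ ε) := by
    rw [integrable_indicator_iff measurableSet_Ioc]
    exact integrableOn_const (by simp)
  rw [intervalIntegral.integral_of_le hπ, ← integral_indicator measurableSet_Ioc, hgauss,
    ← integral_sub hGi hNi]
  refine (norm_integral_le_of_norm_le ((hGauss.const_mul _).add hεi) (.of_forall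
    (norm_indicator_cexp_sub_exp_neg_mul_sq_le hr hrN hA hB hT hδ hδπ hε hmajor hre
      hminor))).trans_eq ?_
  rw [integral_add' (hGauss.const_mul _) hεi, integral_const_mul, integral_gaussian,
    integral_indicator measurableSet_Ioc, setIntegral_const, Real.volume_real_Ioc_of_le hπ,
    div_div_eq_mul_div, mul_comm π 2, smul_eq_mul]
  ring

end LocalLimit

section PowerMoments

open Finset

lemma sum_pow_succ_mul_sub_one {R : Type*} [CommRing R] (z : R) (m : ℕ) :
    (∑ j ∈ range m, z ^ (j + 1)) * (z - 1) = z * (z ^ m - 1) := by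
  simp_rw [pow_succ', ← mul_sum, mul_assoc, geom_sum_mul]

/-- The derivative of order `k + 1` of `truncLog m` at `x` with respect to `x * d/dx`. These are the
Taylor coefficients of `circlePhase` at `θ = 0`. -/
noncomputable def powerMoment (m k : ℕ) (x : ℝ) : ℝ :=
  ∑ j ∈ range m, (j + 1 : ℕ) ^ k * x ^ (j + 1)

variable {m k : ℕ} {x : ℝ}

lemma powerMoment_zero_eq (m : ℕ) (x : ℝ) : powerMoment m 0 x = ∑ j ∈ range m, x ^ (j + 1) := by
  simp only [powerMoment, pow_zero, one_mul]

lemma powerMoment_succ_le (hx : 0 ≤ x) : powerMoment m (k + 1) x ≤ m * powerMoment m k x := by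
  rw [powerMoment, powerMoment, mul_sum]
  refine sum_le_sum fun j hj ↦ ?_
  have hjm : ((j + 1 : ℕ) : ℝ) ≤ m := mod_cast mem_range.1 hj
  rw [pow_succ', mul_assoc]
  gcongr

lemma powerMoment_gap_succ (m : ℕ) (x : ℝ) :
    (m + 1 : ℕ) * powerMoment (m + 1) 0 x - powerMoment (m + 1) 1 x =
      m * powerMoment m 0 x - powerMoment m 1 x + ∑ j ∈ range m, x ^ (j + 1) := by
  simp only [powerMoment, sum_range_succ, pow_zero, one_mul, pow_one]
  push_cast
  ring

lemma powerMoment_gap_mul_sq_le (m : ℕ) (hx : 1 < x) :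
    (m * powerMoment m 0 x - powerMoment m 1 x) * (x - 1) ^ 2 ≤ x ^ (m + 1) := by
  induction m with
  | zero => simpa [powerMoment] using hx.le.trans' zero_le_one
  | succ m ih =>
    rw [powerMoment_gap_succ, add_mul]
    have hgeom : (∑ j ∈ range m, x ^ (j + 1)) * (x - 1) ^ 2 = x * (x ^ m - 1) * (x - 1) := by
      rw [← sum_pow_succ_mul_sub_one]
      ring
    rw [hgeom]
    calc (m * powerMoment m 0 x - powerMoment m 1 x) * (x - 1) ^ 2 + x * (x ^ m - 1) * (x - 1)
        ≤ x ^ (m + 1) + x * (x ^ m - 1) * (x - 1) := by gcongr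
      _ = x ^ (m + 1 + 1) - x * (x - 1) := by ring
      _ ≤ x ^ (m + 1 + 1) := sub_le_self _ (mul_nonneg (by linarith) (by linarith))

namespace IsSaddlePoint

variable {n y : ℝ} (h : IsSaddlePoint m n y)
include h

lemma one_lt_inv : 1 < y⁻¹ := (one_lt_inv₀ h.pos).2 h.lt_one

lemma inv_pow_eq : y⁻¹ ^ m = (1 - y) * n := by
  rw [inv_pow]
  refine inv_eq_of_mul_eq_one_right ?_
  rw [← mul_assoc, h.eq_one]

lemma one_sub_inv_eq : (1 - y)⁻¹ = 1 + y / (1 - y) := by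
  have := h.one_sub_pos.ne'
  field_simp
  ring

lemma inv_sub_one_mul : (y⁻¹ - 1) * (y / (1 - y)) = 1 := by
  have := h.one_sub_pos.ne'
  have := h.pos.ne'
  field_simp

lemma inv_mul_div_one_sub : y⁻¹ * (y / (1 - y)) = (1 - y)⁻¹ := by
  rw [← mul_div_assoc, inv_mul_cancel₀ h.pos.ne', one_div]

lemma powerMoment_zero : powerMoment m 0 y⁻¹ = n - (1 - y)⁻¹ := by
  calc powerMoment m 0 y⁻¹ = powerMoment m 0 y⁻¹ * (y⁻¹ - 1) * (y / (1 - y)) := by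
        rw [mul_assoc, h.inv_sub_one_mul, mul_one]
    _ = ((1 - y) * n - 1) * (y⁻¹ * (y / (1 - y))) := by
        rw [powerMoment_zero_eq, sum_pow_succ_mul_sub_one, h.inv_pow_eq]
        ring
    _ = n - (1 - y)⁻¹ := by
        have := h.one_sub_pos.ne'
        rw [h.inv_mul_div_one_sub]
        field_simp

lemma powerMoment_gap_le : m * powerMoment m 0 y⁻¹ - powerMoment m 1 y⁻¹ ≤ n * (y / (1 - y)) := by
  calc m * powerMoment m 0 y⁻¹ - powerMoment m 1 y⁻¹
      = (m * powerMoment m 0 y⁻¹ - powerMoment m 1 y⁻¹) * (y⁻¹ - 1) ^ 2 * (y / (1 - y)) ^ 2 := by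
        rw [mul_assoc, ← mul_pow, h.inv_sub_one_mul, one_pow, mul_one]
    _ ≤ y⁻¹ ^ (m + 1) * (y / (1 - y)) ^ 2 := by
        gcongr
        exact powerMoment_gap_mul_sq_le m h.one_lt_inv
    _ = (1 - y) * n * (y⁻¹ * (y / (1 - y))) * (y / (1 - y)) := by
        rw [pow_succ, h.inv_pow_eq]
        ring
    _ = n * (y / (1 - y)) := by
        have := h.one_sub_pos.ne'
        rw [h.inv_mul_div_one_sub]
        field_simp

lemma sub_powerMoment_one_le :
    n * m - powerMoment m 1 y⁻¹ ≤ m * (1 - y)⁻¹ + n * (y / (1 - y)) := by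
  have hgap := h.powerMoment_gap_le
  rw [h.powerMoment_zero] at hgap
  linarith

lemma powerMoment_one_le : powerMoment m 1 y⁻¹ ≤ n * m := by
  have hle := powerMoment_succ_le (m := m) (k := 0) (inv_pos.2 h.pos).le
  have hpos : 0 ≤ m * (1 - y)⁻¹ := mul_nonneg m.cast_nonneg (inv_pos.2 h.one_sub_pos).le
  rw [h.powerMoment_zero] at hle
  linarith

lemma powerMoment_two_le : powerMoment m 2 y⁻¹ ≤ m ^ 2 * n := by
  calc powerMoment m 2 y⁻¹ ≤ m * powerMoment m 1 y⁻¹ := powerMoment_succ_le (inv_pos.2 h.pos).le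
    _ ≤ m * (n * m) := by
        gcongr
        exact h.powerMoment_one_le
    _ = m ^ 2 * n := by ring

end IsSaddlePoint

end PowerMoments

section SaddlePointEstimate

open Finset

lemma norm_cexp_mul_I_sub_taylor_le {t : ℝ} (ht : |t| ≤ π) :
    ‖Complex.exp (t * Complex.I) - 1 - t * Complex.I + t ^ 2 / 2‖ ≤ |t| ^ 3 * exp π := by
  have hnorm : ‖(t : ℂ) * Complex.I‖ = |t| := by
    rw [norm_mul, Complex.norm_I, mul_one, Complex.norm_real, norm_eq_abs]
  have htaylor : ∑ k ∈ range 3, ((t : ℂ) * Complex.I) ^ k / k.factorial =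
      1 + t * Complex.I - t ^ 2 / 2 := by
    simp only [sum_range_succ, sum_range_zero, mul_pow, Complex.I_sq, Nat.factorial]
    push_cast
    ring
  have hbound := Complex.norm_exp_sub_sum_le_norm_mul_exp (t * Complex.I) 3
  rw [htaylor, hnorm] at hbound
  calc ‖Complex.exp (t * Complex.I) - 1 - t * Complex.I + t ^ 2 / 2‖
      = ‖Complex.exp (t * Complex.I) - (1 + t * Complex.I - t ^ 2 / 2)‖ := by ring_nf
    _ ≤ |t| ^ 3 * exp |t| := hbound
    _ ≤ |t| ^ 3 * exp π := by gcongr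

variable {m : ℕ}

lemma abs_succ_mul_le_pi {j : ℕ} (hj : j ∈ range m) {θ : ℝ} (hθ : m * |θ| ≤ π) :
    |(j + 1 : ℕ) * θ| ≤ π := by
  have hjm : ((j + 1 : ℕ) : ℝ) ≤ m := mod_cast mem_range.1 hj
  rw [abs_mul, Nat.abs_cast]
  exact (mul_le_mul_of_nonneg_right hjm (abs_nonneg θ)).trans hθ

lemma circlePhase_add_eq (m n : ℕ) (x θ : ℝ) :
    circlePhase m n x θ + (n * m / 2 * θ ^ 2 : ℝ) =
      -((n - powerMoment m 0 x) * θ : ℝ) * Complex.I +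
        ((n * m - powerMoment m 1 x) / 2 * θ ^ 2 : ℝ) +
      ∑ j ∈ range m, ((x ^ (j + 1) / (j + 1 : ℕ) : ℝ) : ℂ) *
        (Complex.exp (((j + 1 : ℕ) * θ : ℝ) * Complex.I) - 1 -
          ((j + 1 : ℕ) * θ : ℝ) * Complex.I + ((j + 1 : ℕ) * θ : ℝ) ^ 2 / 2) := by
  have hterm (j : ℕ) : ((x ^ (j + 1) / (j + 1 : ℕ) : ℝ) : ℂ) *
        (Complex.exp (((j + 1 : ℕ) * θ : ℝ) * Complex.I) - 1 -
          ((j + 1 : ℕ) * θ : ℝ) * Complex.I + ((j + 1 : ℕ) * θ : ℝ) ^ 2 / 2) =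
      ((x ^ (j + 1) / (j + 1 : ℕ) : ℝ) : ℂ) *
        (Complex.exp (((j + 1 : ℕ) * θ : ℝ) * Complex.I) - 1) -
        ((j + 1 : ℕ) ^ 0 * x ^ (j + 1) : ℝ) * (θ * Complex.I) +
        ((j + 1 : ℕ) ^ 1 * x ^ (j + 1) : ℝ) * (θ ^ 2 / 2) := by
    have hj : (j : ℂ) + 1 ≠ 0 := mod_cast j.succ_ne_zero
    push_cast
    field_simp
  rw [sum_congr rfl fun j _ ↦ hterm j, sum_add_distrib, sum_sub_distrib, ← sum_mul, ← sum_mul,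
    circlePhase_eq_sum, powerMoment, powerMoment]
  push_cast
  ring

lemma norm_circlePhase_add_le {n : ℕ} {x θ : ℝ} (hx : 0 < x) (hθ : m * |θ| ≤ π) :
    ‖circlePhase m n x θ + (n * m / 2 * θ ^ 2 : ℝ)‖ ≤
      |n - powerMoment m 0 x| * |θ| + |n * m - powerMoment m 1 x| / 2 * |θ| ^ 2 +
        powerMoment m 2 x * exp π * |θ| ^ 3 := by
  rw [circlePhase_add_eq]
  refine norm_add₃_le.trans (add_le_add_three (le_of_eq ?_) (le_of_eq ?_) ?_)
  · rw [norm_mul, norm_neg, Complex.norm_I, Complex.norm_real, mul_one, norm_eq_abs, abs_mul]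
  · rw [Complex.norm_real, norm_eq_abs, abs_mul, abs_div, abs_pow, abs_two]
  · rw [powerMoment, sum_mul, sum_mul]
    refine (norm_sum_le _ _).trans (sum_le_sum fun j hj ↦ ?_)
    rw [norm_mul, Complex.norm_real, norm_of_nonneg (by positivity)]
    calc x ^ (j + 1) / (j + 1 : ℕ) * ‖_‖
        ≤ x ^ (j + 1) / (j + 1 : ℕ) * (|(j + 1 : ℕ) * θ| ^ 3 * exp π) := by
          gcongr
          exact norm_cexp_mul_I_sub_taylor_le (abs_succ_mul_le_pi hj hθ)
      _ = (j + 1 : ℕ) ^ 2 * x ^ (j + 1) * exp π * |θ| ^ 3 := by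
          rw [abs_mul, Nat.abs_cast]
          field_simp

lemma re_circlePhase (m n : ℕ) (x θ : ℝ) :
    (circlePhase m n x θ).re =
      ∑ j ∈ range m, x ^ (j + 1) / (j + 1 : ℕ) * (cos ((j + 1 : ℕ) * θ) - 1) := by
  rw [circlePhase_eq_sum, Complex.sub_re, Complex.re_sum, Complex.re_ofReal_mul, Complex.I_re,
    mul_zero, sub_zero]
  refine sum_congr rfl fun j _ ↦ ?_
  rw [Complex.re_ofReal_mul, Complex.sub_re, Complex.exp_ofReal_mul_I_re, Complex.one_re]

lemma re_circlePhase_le {n : ℕ} {x θ : ℝ} (hx : 0 < x) (hθ : m * |θ| ≤ π) :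
    (circlePhase m n x θ).re ≤ -(2 / π ^ 2 * powerMoment m 1 x * θ ^ 2) := by
  rw [re_circlePhase, powerMoment, mul_sum, sum_mul, ← sum_neg_distrib]
  refine sum_le_sum fun j hj ↦ ?_
  calc x ^ (j + 1) / (j + 1 : ℕ) * (cos ((j + 1 : ℕ) * θ) - 1)
      ≤ x ^ (j + 1) / (j + 1 : ℕ) * (-(2 / π ^ 2 * ((j + 1 : ℕ) * θ) ^ 2)) := by
        gcongr
        linarith [cos_le_one_sub_mul_cos_sq (abs_succ_mul_le_pi hj hθ)]
    _ = -(2 / π ^ 2 * ((j + 1 : ℕ) ^ 1 * x ^ (j + 1)) * θ ^ 2) := by field_simp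

lemma exp_pi_le : exp π ≤ 55 := by
  calc exp π ≤ exp 1 ^ 4 := by
        rw [← exp_nat_mul]
        gcongr
        push_cast
        linarith [pi_le_four]
    _ ≤ 2.72 ^ 4 := by
        gcongr
        exact exp_one_lt_d9.le.trans (by norm_num)
    _ ≤ 55 := by norm_num

lemma localLimit_constant_le {M N s V : ℝ} (hM : 1 ≤ M) (hMs : M ≤ s) (hsN : s ≤ N)
    (hs : s ^ 2 = N * M) (hV : 0 ≤ V) :
    2 * (1 + V) / (s / 4) + 4 * ((M * (1 + V) + N * V) / 2) / (s / 4) ^ 2 +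
        8 * (M ^ 2 * N * exp π) / (s / 4) ^ 3 + 2 / (π / M * (s / 4)) ≤
      30000 * (V / M + M / s) := by
  have hs0 : 0 < s := by linarith
  have hN0 : 0 < N := by linarith
  have hsV : V / s ≤ V / M := by gcongr
  have hNV : V / N ≤ V / M := by gcongr; linarith
  have hs1 : 1 / s ≤ M / s := by gcongr
  have hN1 : 1 / N ≤ M / s := by gcongr
  have hVM : 0 ≤ V / M := by positivity
  have hMs0 : 0 < M / s := by positivity
  have hlinear : 2 * (1 + V) / (s / 4) = 8 * (1 / s + V / s) := by
    field_simp
    norm_num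
  have hquad : 4 * ((M * (1 + V) + N * V) / 2) / (s / 4) ^ 2 = 32 * (1 / N + V / N + V / M) := by
    rw [div_pow, hs]
    field_simp
    ring
  have hcubic : 8 * (M ^ 2 * N * exp π) / (s / 4) ^ 3 = 512 * exp π * (M / s) := by
    rw [div_pow, pow_succ s, hs]
    field_simp
    norm_num
  have htail : 2 / (π / M * (s / 4)) ≤ 8 * (M / s) := by
    rw [show 2 / (π / M * (s / 4)) = 8 * (M / s) / π by field_simp; norm_num]
    exact div_le_self (by positivity) (by linarith [pi_gt_three])
  have hexp : 512 * exp π * (M / s) ≤ 512 * 55 * (M / s) := by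
    gcongr
    exact exp_pi_le
  rw [hlinear, hquad, hcubic]
  linarith

namespace IsSaddlePoint

variable {n : ℕ} {y : ℝ} (h : IsSaddlePoint m n y) (hm : 1 ≤ m) (hmn : m ≤ n)
  (hn : (1 - y)⁻¹ ≤ n / 4) (hV : y / (1 - y) ≤ m / 4)
include h hm

lemma norm_circlePhase_add_le {θ : ℝ} (hθ : |θ| ≤ π / m) :
    ‖circlePhase m n y⁻¹ θ + (n * m / 2 * θ ^ 2 : ℝ)‖ ≤
      (1 + y / (1 - y)) * |θ| + (m * (1 + y / (1 - y)) + n * (y / (1 - y))) / 2 * |θ| ^ 2 +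
        m ^ 2 * n * exp π * |θ| ^ 3 := by
  have hm0 : (0 : ℝ) < m := mod_cast hm
  have hv : 0 < 1 + y / (1 - y) := h.one_sub_inv_eq ▸ inv_pos.2 h.one_sub_pos
  have hle := h.sub_powerMoment_one_le
  refine (_root_.norm_circlePhase_add_le (inv_pos.2 h.pos) ?_).trans ?_
  · rwa [le_div_iff₀' hm0] at hθ
  · rw [h.powerMoment_zero, sub_sub_cancel, abs_of_nonneg (sub_nonneg.2 h.powerMoment_one_le)]
    rw [h.one_sub_inv_eq] at hle ⊢
    rw [abs_of_pos hv]
    gcongr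
    exact h.powerMoment_two_le

include hn hV

lemma re_circlePhase_le {θ : ℝ} (hθ : |θ| ≤ π / m) :
    (circlePhase m n y⁻¹ θ).re ≤ -((√(n * m) / 4) ^ 2 * θ ^ 2) := by
  have hm0 : (0 : ℝ) < m := mod_cast hm
  have hS : n * m / 2 ≤ powerMoment m 1 y⁻¹ := by
    have hmn : m * (1 - y)⁻¹ ≤ m * (n / 4) := by gcongr
    have hnm : n * (y / (1 - y)) ≤ n * (m / 4 : ℝ) := by gcongr
    linarith [h.sub_powerMoment_one_le]
  refine (_root_.re_circlePhase_le (inv_pos.2 h.pos) ?_).trans (neg_le_neg ?_)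
  · rwa [le_div_iff₀' hm0] at hθ
  · rw [div_pow, sq_sqrt (by positivity)]
    gcongr
    calc n * m / 4 ^ 2 ≤ n * m / π ^ 2 := by
          gcongr
          exact pi_le_four
      _ = 2 / π ^ 2 * (n * m / 2) := by ring
      _ ≤ 2 / π ^ 2 * powerMoment m 1 y⁻¹ := by gcongr

variable (hminor : ∀ θ : ℝ, π / m < |θ| → |θ| ≤ π → (circlePhase m n y⁻¹ θ).re ≤ -log n)
include hmn hminor

lemma norm_integral_circlePhase_sub_le :
    ‖(∫ θ in -π..π, Complex.exp (circlePhase m n y⁻¹ θ)) - (√(2 * π / (n * m)) : ℝ)‖ ≤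
      30000 * (y / (1 - y) / m + m / √(n * m)) * √(2 * π / (√(n * m) / 4) ^ 2) +
        2 * π * (1 / n) := by
  have hm1 : (1 : ℝ) ≤ m := mod_cast hm
  have hn0 : (0 : ℝ) < n := mod_cast hm.trans hmn
  have hmn' : (m : ℝ) ≤ n := mod_cast hmn
  have hV0 : 0 < y / (1 - y) := div_pos h.pos h.one_sub_pos
  have hms : m ≤ √(n * m : ℝ) := le_sqrt_of_sq_le (by rw [sq]; gcongr)
  have hsn : √(n * m : ℝ) ≤ n := sqrt_le_iff.2 ⟨hn0.le, by rw [sq]; gcongr⟩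
  refine (norm_integral_cexp_sub_sqrt_le (N := n * m) (r := √(n * m) / 4) (δ := π / m)
    (ε := 1 / n) (by positivity) ?_ ?_ ?_ ?_ (by positivity) (div_le_self pi_pos.le hm1)
    (by positivity) (fun θ ↦ h.norm_circlePhase_add_le hm) (fun θ ↦ h.re_circlePhase_le hm hn hV)
    (fun θ hθ hθπ ↦ ?_) (continuous_circlePhase m n y⁻¹)).trans ?_
  · rw [div_pow, sq_sqrt (by positivity)]
    linarith [(by positivity : 0 ≤ (n : ℝ) * m)]
  · positivity
  · positivity
  · positivity
  · rw [Complex.norm_exp, one_div, ← exp_log (inv_pos.2 hn0), log_inv]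
    exact exp_le_exp.2 (hminor θ hθ hθπ)
  · gcongr
    exact localLimit_constant_le hm1 hms hsn (sq_sqrt (by positivity)) hV0.le

lemma abs_permProb_mul_sub_one_le :
    |permProb n m * y⁻¹ ^ n * exp (-truncLog m y⁻¹) * √(2 * π * n * m) - 1| ≤
      200000 * (y / (1 - y) / m + √(m / n)) := by
  have hm0 : (0 : ℝ) < m := mod_cast hm
  have hn0 : (0 : ℝ) < n := mod_cast hm.trans hmn
  have hV0 : 0 < y / (1 - y) := div_pos h.pos h.one_sub_pos
  have hintegral := h.norm_integral_circlePhase_sub_le hm hmn hn hV hminor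
  rw [integral_exp_circlePhase n y⁻¹ hm, ← Complex.ofReal_sub, Complex.norm_real, norm_eq_abs,
    sqrt_div' _ (by positivity), sqrt_div' _ (by positivity), sqrt_sq (by positivity)] at hintegral
  set P := permProb n m * y⁻¹ ^ n * exp (-truncLog m y⁻¹)
  set s := √(n * m : ℝ) with hs
  set l := √(2 * π) with hl
  have hs0 : 0 < s := sqrt_pos.2 (by positivity)
  have hss : s ^ 2 = n * m := sq_sqrt (by positivity)
  have hl0 : 0 < l := sqrt_pos.2 (by positivity)
  have hll : l ^ 2 = 2 * π := sq_sqrt (by positivity)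
  have hl3 : l ≤ 3 := sqrt_le_iff.2 ⟨by norm_num, by linarith [pi_lt_d2]⟩
  have hls : √(2 * π * n * m) = l * s := by rw [hl, hs, mul_assoc, sqrt_mul (by positivity)]
  have hms : √(m / n : ℝ) = m / s := by
    rw [show (m : ℝ) / n = (m / s) ^ 2 by rw [div_pow, hss]; field_simp]
    exact sqrt_sq (by positivity)
  rw [hls, hms, show P * (l * s) - 1 = (2 * π * P - l / s) * (s / l) by rw [← hll]; field_simp,
    abs_mul, abs_of_pos (div_pos hs0 hl0)]
  have hVm : 0 < y / (1 - y) / m := div_pos hV0 hm0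
  calc |2 * π * P - l / s| * (s / l)
      ≤ (30000 * (y / (1 - y) / m + m / s) * (l / (s / 4)) + 2 * π * (1 / n)) * (s / l) := by
        gcongr
    _ = 120000 * (y / (1 - y) / m + m / s) + l * (m / s) := by
        rw [← hll, show (m : ℝ) / s = s / n by rw [div_eq_div_iff hs0.ne' hn0.ne']; linarith]
        field_simp
        ring
    _ ≤ 120000 * (y / (1 - y) / m + m / s) + 3 * (m / s) := by gcongr
    _ ≤ 200000 * (y / (1 - y) / m + m / s) := by linarith [div_pos hm0 hs0]

end IsSaddlePoint

end SaddlePointEstimate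

section MinorArc

open Finset

lemma norm_mul_cexp_sub_one_sq (x θ : ℝ) :
    ‖x * Complex.exp (θ * Complex.I) - 1‖ ^ 2 = (x - 1) ^ 2 + 2 * x * (1 - cos θ) := by
  rw [← Complex.normSq_eq_norm_sq, Complex.normSq_apply, Complex.sub_re, Complex.sub_im,
    Complex.re_ofReal_mul, Complex.im_ofReal_mul, Complex.exp_ofReal_mul_I_re,
    Complex.exp_ofReal_mul_I_im, Complex.one_re, Complex.one_im]
  linear_combination x ^ 2 * sin_sq_add_cos_sq θ

lemma norm_mul_cexp_mul_I {x : ℝ} (hx : 0 ≤ x) (θ : ℝ) :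
    ‖(x * Complex.exp (θ * Complex.I) : ℂ)‖ = x := by
  rw [norm_mul, Complex.norm_exp_ofReal_mul_I, Complex.norm_real, norm_of_nonneg hx, mul_one]

lemma two_div_sq_le_one_sub_cos {c θ : ℝ} (hc : 0 < c) (hcθ : π / c ≤ |θ|) (hθ : |θ| ≤ π) :
    2 / c ^ 2 ≤ 1 - cos θ := by
  calc 2 / c ^ 2 = 2 / π ^ 2 * (π / c) ^ 2 := by field_simp
    _ ≤ 2 / π ^ 2 * |θ| ^ 2 := by gcongr
    _ ≤ 1 - cos θ := by
        rw [sq_abs]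
        linarith [cos_le_one_sub_mul_cos_sq hθ]

lemma re_circlePhase_le_re_sum (m n : ℕ) {x : ℝ} (hx : 0 ≤ x) (θ : ℝ) :
    (circlePhase m n x θ).re ≤
      ((∑ j ∈ range m, (x * Complex.exp (θ * Complex.I)) ^ (j + 1)).re -
        powerMoment m 0 x) / m := by
  have hre : ∀ j : ℕ, ((x * Complex.exp (θ * Complex.I)) ^ (j + 1)).re - x ^ (j + 1) =
      x ^ (j + 1) * (cos ((j + 1 : ℕ) * θ) - 1) := by
    intro j
    rw [mul_exp_mul_I_pow, Complex.re_ofReal_mul, Complex.exp_ofReal_mul_I_re]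
    ring
  rw [re_circlePhase, powerMoment_zero_eq, Complex.re_sum, ← sum_sub_distrib, sum_div]
  refine sum_le_sum fun j hj ↦ ?_
  have hjm : ((j + 1 : ℕ) : ℝ) ≤ m := mod_cast mem_range.1 hj
  rw [hre, div_mul_eq_mul_div, ← neg_le_neg_iff, ← neg_div, ← neg_div, ← mul_neg, neg_sub]
  have hcos : 0 ≤ 1 - cos ((j + 1 : ℕ) * θ) := sub_nonneg.2 (cos_le_one _)
  gcongr

namespace IsSaddlePoint

variable {m n : ℕ} {y θ : ℝ} (h : IsSaddlePoint m n y) (hm : 1 ≤ m)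
include h hm

lemma inv_sub_one_le_mul_norm (hmθ : π / m < |θ|) (hθ : |θ| ≤ π) :
    y⁻¹ - 1 ≤ (1 - 4 * y / ((m * (1 - y)) ^ 2 + 4 * y) / 2) *
      ‖((y⁻¹ : ℝ) : ℂ) * Complex.exp (θ * Complex.I) - 1‖ := by
  have hm0 : (0 : ℝ) < m := mod_cast hm
  have hy := h.pos
  have hy1 := h.one_sub_pos
  have hcos := two_div_sq_le_one_sub_cos hm0 hmθ.le hθ
  set z := ((y⁻¹ : ℝ) : ℂ) * Complex.exp (θ * Complex.I)
  set τ := 4 * y / ((m * (1 - y)) ^ 2 + 4 * y) with hτ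
  have hτ1 : τ ≤ 1 := div_le_one_of_le₀ (by linarith [sq_nonneg (m * (1 - y))]) (by positivity)
  have hz : (y⁻¹ - 1) ^ 2 ≤ (1 - τ) * ‖z - 1‖ ^ 2 := by
    calc (y⁻¹ - 1) ^ 2 = (1 - τ) * ((y⁻¹ - 1) ^ 2 + 2 * y⁻¹ * (2 / m ^ 2)) := by
          rw [hτ]
          field_simp
          ring
      _ ≤ (1 - τ) * ((y⁻¹ - 1) ^ 2 + 2 * y⁻¹ * (1 - cos θ)) := by
          have := sub_nonneg.2 hτ1
          gcongr
      _ = (1 - τ) * ‖z - 1‖ ^ 2 := by rw [norm_mul_cexp_sub_one_sq]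
  refine le_of_sq_le_sq (hz.trans ?_) (mul_nonneg (by linarith) (norm_nonneg _))
  rw [mul_pow]
  gcongr
  linarith [sq_nonneg τ]

lemma norm_sum_pow_le (hmθ : π / m < |θ|) (hθ : |θ| ≤ π) :
    ‖∑ j ∈ range m, (((y⁻¹ : ℝ) : ℂ) * Complex.exp (θ * Complex.I)) ^ (j + 1)‖ ≤
      (n + (1 - y)⁻¹) * (1 - 4 * y / ((m * (1 - y)) ^ 2 + 4 * y) / 2) := by
  have hz1 := h.inv_sub_one_le_mul_norm hm hmθ hθ
  have hx := inv_pos.2 h.pos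
  have hx1 : 0 < y⁻¹ - 1 := sub_pos.2 h.one_lt_inv
  have hz := norm_mul_cexp_mul_I hx.le θ
  set z := ((y⁻¹ : ℝ) : ℂ) * Complex.exp (θ * Complex.I)
  set δ := 1 - 4 * y / ((m * (1 - y)) ^ 2 + 4 * y) / 2
  have hδ : 0 ≤ δ := (pos_of_mul_pos_left (hx1.trans_le hz1) (norm_nonneg _)).le
  refine le_of_mul_le_mul_right ?_ hx1
  calc ‖∑ j ∈ range m, z ^ (j + 1)‖ * (y⁻¹ - 1)
      ≤ ‖∑ j ∈ range m, z ^ (j + 1)‖ * (δ * ‖z - 1‖) := by gcongr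
    _ = ‖z * (z ^ m - 1)‖ * δ := by
        rw [← sum_pow_succ_mul_sub_one, norm_mul]
        ring
    _ ≤ y⁻¹ * (y⁻¹ ^ m + 1) * δ := by
        rw [norm_mul, hz]
        gcongr
        refine (norm_sub_le _ _).trans_eq ?_
        rw [norm_pow, hz, norm_one]
    _ = (n + (1 - y)⁻¹) * δ * (y⁻¹ - 1) := by
        have := h.pos.ne'
        have := h.one_sub_pos.ne'
        rw [h.inv_pow_eq]
        field_simp

lemma re_circlePhase_le_sub (hmθ : π / m < |θ|) (hθ : |θ| ≤ π) :
    (circlePhase m n y⁻¹ θ).re ≤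
      2 * (1 - y)⁻¹ / m - n / (2 * m) * (4 * y / ((m * (1 - y)) ^ 2 + 4 * y)) := by
  have hsum := (Complex.re_le_norm _).trans (h.norm_sum_pow_le hm hmθ hθ)
  have hτ : 0 ≤ 4 * y / ((m * (1 - y)) ^ 2 + 4 * y) := by
    have := h.pos
    positivity
  set τ := 4 * y / ((m * (1 - y)) ^ 2 + 4 * y)
  have hv : 0 ≤ (1 - y)⁻¹ * τ := mul_nonneg (inv_pos.2 h.one_sub_pos).le hτ
  calc (circlePhase m n y⁻¹ θ).re
      ≤ ((n + (1 - y)⁻¹) * (1 - τ / 2) - (n - (1 - y)⁻¹)) / m := by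
        refine (re_circlePhase_le_re_sum m n (inv_pos.2 h.pos).le θ).trans ?_
        rw [h.powerMoment_zero]
        exact div_le_div_of_nonneg_right (sub_le_sub_right hsum _) m.cast_nonneg
    _ ≤ (2 * (1 - y)⁻¹ - n / 2 * τ) / m := by
        refine div_le_div_of_nonneg_right ?_ m.cast_nonneg
        linarith
    _ = 2 * (1 - y)⁻¹ / m - n / (2 * m) * τ := by ring

end IsSaddlePoint

end MinorArc

section SaddlePointLocation

lemma one_third_le_div_add_one_pow {m : ℕ} (hm : 1 ≤ m) : 1 / 3 ≤ ((m : ℝ) / (m + 1)) ^ m := by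
  have hm0 : (0 : ℝ) < m := mod_cast hm
  have hpow : (1 / (m : ℝ) + 1) ^ m ≤ 3 := by
    calc (1 / (m : ℝ) + 1) ^ m ≤ exp (1 / m) ^ m := by
          gcongr
          exact add_one_le_exp _
      _ = exp 1 := by rw [← exp_nat_mul, mul_one_div_cancel hm0.ne']
      _ ≤ 3 := exp_one_lt_three.le
  rw [show (m : ℝ) / (m + 1) = (1 / (m : ℝ) + 1)⁻¹ by field_simp; ring, inv_pow, one_div]
  exact inv_anti₀ (by positivity) hpow

lemma exists_isSaddlePoint {m : ℕ} {x : ℝ} (hm : 1 ≤ m) (hx : 6 * m ≤ x) :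
    ∃ y, IsSaddlePoint m x y ∧ (1 - y)⁻¹ ≤ m + 1 := by
  have hm1 : (1 : ℝ) ≤ m := mod_cast hm
  set b : ℝ := m / (m + 1) with hb
  have h1b : 1 - b = (m + 1 : ℝ)⁻¹ := by
    rw [hb]
    field_simp
    ring
  have h0 : (0 : ℝ) ^ m * (1 - 0) * x = 0 := by
    rw [zero_pow (by omega), zero_mul, zero_mul]
  have hbx : 1 ≤ b ^ m * (1 - b) * x := by
    calc (1 : ℝ) ≤ 2 * m / (m + 1) := by
          rw [one_le_div (by positivity)]
          linarith
      _ = 1 / 3 * (m + 1 : ℝ)⁻¹ * (6 * m) := by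
          field_simp
          norm_num
      _ ≤ b ^ m * (1 - b) * x := by
          rw [h1b]
          gcongr
          exact one_third_le_div_add_one_pow hm
  obtain ⟨y, hy, hyx⟩ := intermediate_value_Icc (f := fun y ↦ y ^ m * (1 - y) * x)
    (show 0 ≤ b by positivity) (by fun_prop) ⟨h0.le.trans zero_le_one, hbx⟩
  have hby : (m + 1 : ℝ)⁻¹ ≤ 1 - y := by linarith [hy.2]
  have h1y : 0 < 1 - y := lt_of_lt_of_le (by positivity) hby
  refine ⟨y, ⟨hy.1.lt_of_ne' ?_, by linarith, hyx⟩, inv_le_of_inv_le₀ (by positivity) hby⟩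
  rintro rfl
  exact zero_ne_one (h0.symm.trans hyx)

/-- The number `x ^ (-1 / m)`, a first approximation to the saddle point `y` of `IsSaddlePoint`; the
final error is measured by `invRoot m n / (1 - invRoot m n)`. -/
noncomputable def invRoot (m : ℕ) (x : ℝ) : ℝ := x ^ (-(1 : ℝ) / m)

section InvRoot

variable {m : ℕ} {x : ℝ}

lemma invRoot_pos (m : ℕ) (hx : 0 < x) : 0 < invRoot m x := rpow_pos_of_pos hx _

lemma invRoot_lt_one (hm : 1 ≤ m) (hx : 1 < x) : invRoot m x < 1 :=
  rpow_lt_one_of_one_lt_of_neg hx (div_neg_of_neg_of_pos neg_one_lt_zero (mod_cast hm))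

lemma invRoot_pow (hm : 1 ≤ m) (hx : 0 ≤ x) : invRoot m x ^ m = x⁻¹ := by
  rw [invRoot, ← rpow_natCast, ← rpow_mul hx,
    div_mul_cancel₀ _ (Nat.cast_ne_zero.2 (by omega)), rpow_neg_one]

lemma invRoot_eq_exp (m : ℕ) (hx : 0 < x) : invRoot m x = exp (-(log x / m)) := by
  rw [invRoot, rpow_def_of_pos hx]
  ring_nf

lemma one_sub_invRoot_le (m : ℕ) (hx : 0 < x) : 1 - invRoot m x ≤ log x / m := by
  rw [invRoot_eq_exp m hx]
  linarith [add_one_le_exp (-(log x / m))]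

lemma inv_le_invRoot {b : ℝ} (hm : 1 ≤ m) (hx : 0 < x) (hb : 0 < b) (hxb : x ≤ b ^ m) :
    b⁻¹ ≤ invRoot m x := by
  rw [← pow_le_pow_iff_left₀ (inv_pos.2 hb).le (invRoot_pos m hx).le (by omega : m ≠ 0),
    invRoot_pow hm hx.le, inv_pow]
  exact inv_anti₀ hx hxb

lemma one_third_le_invRoot (hm : 1 ≤ m) (hx : 0 < x) (hxm : log x ≤ m) :
    1 / 3 ≤ invRoot m x := by
  rw [one_div]
  refine inv_le_invRoot hm hx three_pos ?_
  calc x = exp (log x) := (exp_log hx).symm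
    _ ≤ exp m := exp_le_exp.2 hxm
    _ = exp 1 ^ m := by rw [← exp_nat_mul, mul_one]
    _ ≤ 3 ^ m := by
        gcongr
        exact exp_one_lt_three.le

lemma invRoot_le_div_one_sub (hm : 1 ≤ m) (hx : 1 < x) :
    invRoot m x ≤ invRoot m x / (1 - invRoot m x) :=
  have hw := invRoot_pos m (zero_lt_one.trans hx)
  le_div_self hw.le (sub_pos.2 (invRoot_lt_one hm hx)) (by linarith)

end InvRoot

namespace IsSaddlePoint

variable {m : ℕ} {x y : ℝ} (h : IsSaddlePoint m x y)
include h

lemma pow_eq : y ^ m = (1 - y)⁻¹ * x⁻¹ := by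
  rw [← mul_inv, ← h.inv_pow_eq, inv_pow, inv_inv]

variable (hx : 0 < x)
include hx

lemma div_one_sub_mul_log_le (hv : (1 - y)⁻¹ ≤ m + 1) :
    y / (1 - y) * log (x / (m + 1)) ≤ m := by
  have hV : 0 < y / (1 - y) := div_pos h.pos h.one_sub_pos
  have hpow : x / (m + 1) ≤ y⁻¹ ^ m := by
    rw [h.inv_pow_eq, div_eq_inv_mul]
    gcongr
    exact inv_le_of_inv_le₀ h.one_sub_pos hv
  calc y / (1 - y) * log (x / (m + 1)) ≤ y / (1 - y) * (m * (y⁻¹ - 1)) := by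
        gcongr
        refine (log_le_log (by positivity) hpow).trans ?_
        rw [log_pow]
        gcongr
        exact log_le_sub_one_of_pos (inv_pos.2 h.pos)
    _ = m * ((y⁻¹ - 1) * (y / (1 - y))) := by ring
    _ = m := by rw [h.inv_sub_one_mul, mul_one]

variable (hm : 1 ≤ m)
include hm

lemma invRoot_le : invRoot m x ≤ y := by
  rw [← pow_le_pow_iff_left₀ (invRoot_pos m hx).le h.pos.le (by omega : m ≠ 0),
    invRoot_pow hm hx.le, h.pow_eq]
  exact le_mul_of_one_le_left (inv_pos.2 hx).le
    ((one_le_inv₀ h.one_sub_pos).2 (by linarith [h.pos]))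

lemma le_two_mul_invRoot (hv : (1 - y)⁻¹ ≤ m + 1) : y ≤ 2 * invRoot m x := by
  have hw := invRoot_pos m hx
  have hpow : (m + 1 : ℝ) ≤ 2 ^ m := mod_cast (Nat.lt_two_pow_self : m < 2 ^ m)
  rw [← pow_le_pow_iff_left₀ h.pos.le (by positivity) (by omega : m ≠ 0), mul_pow,
    invRoot_pow hm hx.le, h.pow_eq]
  gcongr
  exact hv.trans hpow

end IsSaddlePoint

end SaddlePointLocation

section LogError

/-- The logarithm of the ratio between `permProb n m` and its main term
`exp (-mainExponent m n) / √(2 * π * n * m)`. -/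
noncomputable def logError (n m : ℕ) : ℝ :=
  log (permProb n m) + 1 / 2 * log (2 * π * n * m) + mainExponent m n

variable {m n : ℕ} (hm : 1 ≤ m) (hn : 1 ≤ n)
include hm hn

lemma permProb_mul_sqrt_mul_exp_sub_logError :
    permProb n m * √(2 * π * n * m) * exp (mainExponent m n - logError n m) = 1 := by
  have h0 : 0 < 2 * π * n * m := by positivity
  have hs := sqrt_pos.2 h0
  have hp := permProb_pos n m
  rw [← exp_log (mul_pos hp hs), log_mul hp.ne' hs.ne', log_sqrt h0.le, ← exp_add,
    exp_eq_one_iff, logError]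
  ring

lemma IsSaddlePoint.logError_eq {y : ℝ} (h : IsSaddlePoint m n y) :
    logError n m =
      log (permProb n m * y⁻¹ ^ n * exp (-truncLog m y⁻¹) * √(2 * π * n * m)) +
        (truncLog m y⁻¹ + n * log y + mainExponent m n) := by
  have h0 : 0 < 2 * π * n * m := by positivity
  have hp := permProb_pos n m
  have hy := pow_pos (inv_pos.2 h.pos) n
  rw [log_mul (by positivity) (sqrt_pos.2 h0).ne', log_mul (by positivity) (exp_pos _).ne',
    log_mul hp.ne' hy.ne', log_exp, log_pow, log_inv, log_sqrt h0.le, logError]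
  ring

end LogError

lemma abs_log_le_two_mul {p ε : ℝ} (hp : |p - 1| ≤ ε) (hε : ε ≤ 1 / 2) : |log p| ≤ 2 * ε := by
  obtain ⟨hlow, hupp⟩ := abs_le.1 hp
  have hp0 : 0 < p := by linarith
  have hinv : p⁻¹ - 1 ≤ 2 * ε := by
    calc p⁻¹ - 1 = (1 - p) * p⁻¹ := by rw [sub_mul, one_mul, mul_inv_cancel₀ hp0.ne']
      _ ≤ ε * 2 := by
          gcongr
          · linarith [abs_nonneg (p - 1)]
          · linarith
          · exact inv_le_of_inv_le₀ two_pos (by linarith)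
      _ = 2 * ε := mul_comm _ _
  exact abs_le.2 ⟨by linarith [one_sub_inv_le_log_of_pos hp0],
    by linarith [log_le_sub_one_of_pos hp0]⟩

section ShortCycles

variable {m n : ℕ} {a : ℝ}

lemma invRoot_cases (hm : 2 ≤ m) (ha : 1 ≤ a) (hlog : log (a ^ 3) ≤ a) :
    m = 2 ∨ m ≤ a ∧ a⁻¹ ≤ invRoot m (a ^ 3) ∨ 1 / 3 ≤ invRoot m (a ^ 3) := by
  have ha0 : 0 < a := by linarith
  obtain rfl | hm3 := hm.eq_or_lt
  · exact .inl rfl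
  obtain hma | hma := le_total (m : ℝ) a
  · exact .inr (.inl ⟨hma, inv_le_invRoot (by omega) (by positivity) ha0
      (pow_le_pow_right₀ ha hm3)⟩)
  · exact .inr (.inr (one_third_le_invRoot (by omega) (by positivity) (hlog.trans hma)))

lemma le_mul_invRoot (hm : 2 ≤ m) (ha : 1 ≤ a) (hlog : log (a ^ 3) ≤ a) (hma : m ≤ a ^ 2) :
    m ≤ 3 * a ^ 2 * invRoot m (a ^ 3) := by
  have ha0 : 0 < a := by linarith
  have hw := invRoot_pos m (pow_pos ha0 3)
  obtain rfl | ⟨hma', hw⟩ | hw := invRoot_cases hm ha hlog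
  · refine le_of_sq_le_sq ?_ (by positivity)
    rw [mul_pow, invRoot_pow one_le_two (by positivity)]
    field_simp
    norm_num
    linarith
  · calc (m : ℝ) ≤ 3 * a := by linarith
      _ = 3 * a ^ 2 * a⁻¹ := by field_simp
      _ ≤ 3 * a ^ 2 * invRoot m (a ^ 3) := by gcongr
  · calc (m : ℝ) ≤ 3 * a ^ 2 * (1 / 3) := by linarith
      _ ≤ 3 * a ^ 2 * invRoot m (a ^ 3) := by gcongr

lemma div_pow_three_le_sq_invRoot (hm : 2 ≤ m) (ha : 1 ≤ a) (hlog : log (a ^ 3) ≤ a)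
    (hma : m ≤ a ^ 2) : m / a ^ 3 ≤ (3 * invRoot m (a ^ 3)) ^ 2 := by
  have : 0 < a := by linarith
  obtain rfl | ⟨hma', hw⟩ | hw := invRoot_cases hm ha hlog
  · rw [mul_pow, invRoot_pow one_le_two (by positivity), div_eq_mul_inv]
    gcongr
    norm_num
  · calc m / a ^ 3 ≤ a / a ^ 3 := by gcongr
      _ = (1 * a⁻¹) ^ 2 := by field_simp
      _ ≤ (3 * invRoot m (a ^ 3)) ^ 2 := by
          gcongr
          norm_num
  · calc m / a ^ 3 ≤ a ^ 2 * a / a ^ 3 := by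
          gcongr
          exact hma.trans (le_mul_of_one_le_right (by positivity) ha)
      _ = (3 * (1 / 3)) ^ 2 := by
          field_simp
      _ ≤ (3 * invRoot m (a ^ 3)) ^ 2 := by gcongr

/-- The range `2 ≤ m ≤ a ^ 2` of cycle lengths for `n = a ^ 3` large, in which the saddle point
method applies. -/
structure IsShortRange (m : ℕ) (a : ℝ) : Prop where
  one_le : 1 ≤ a
  two_le : 2 ≤ m
  le_sq : m ≤ a ^ 2
  le_log : 3000000 ≤ log (a ^ 3)
  log_pow_le : log (a ^ 3) ^ 4 ≤ a

namespace IsShortRange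

variable (h : IsShortRange m a)
include h

lemma pos : 0 < a := zero_lt_one.trans_le h.one_le

lemma one_le_m : 1 ≤ m := one_le_two.trans h.two_le

lemma log_le : log (a ^ 3) ≤ a :=
  (le_self_pow₀ (by linarith [h.le_log]) four_ne_zero).trans h.log_pow_le

lemma le_a : 3000000 ≤ a := h.le_log.trans h.log_le

lemma log_le_six_mul_log : log (a ^ 3) ≤ 6 * log (a ^ 3 / (m + 1)) := by
  have ha := h.pos
  have hdiv : a / 2 ≤ a ^ 3 / (m + 1) := by
    rw [div_le_div_iff₀ two_pos (by positivity)]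
    nlinarith [h.le_sq, h.one_le]
  have hlog : log a - log 2 ≤ log (a ^ 3 / (m + 1)) := by
    rw [← log_div ha.ne' two_ne_zero]
    exact log_le_log (by positivity) hdiv
  have hL := h.le_log
  rw [log_pow] at hL ⊢
  push_cast at hL ⊢
  linarith [log_two_lt_d9]

lemma sqrt_div_le_invRoot : √(m / a ^ 3) ≤ 3 * invRoot m (a ^ 3) :=
  (sqrt_le_left (by linarith [invRoot_pos m (pow_pos h.pos 3)])).2
    (div_pow_three_le_sq_invRoot h.two_le h.one_le h.log_le h.le_sq)

lemma sqrt_div_le_inv_log : √(m / a ^ 3) ≤ 1 / log (a ^ 3) := by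
  have ha := h.pos
  have hL := h.le_log
  have hLa : log (a ^ 3) ^ 2 ≤ a :=
    (pow_le_pow_right₀ (by linarith) (by norm_num)).trans h.log_pow_le
  rw [sqrt_le_left (by positivity), div_pow, one_pow,
    div_le_div_iff₀ (by positivity) (by positivity)]
  calc m * log (a ^ 3) ^ 2 ≤ a ^ 2 * a := by
        gcongr
        exact h.le_sq
    _ = 1 * a ^ 3 := by ring

section SaddlePoint

variable {y : ℝ} (hy : IsSaddlePoint m (a ^ 3) y)
include hy

lemma mul_one_sub_le : m * (1 - y) ≤ log (a ^ 3) := by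
  have hm0 : (0 : ℝ) < m := mod_cast h.one_le_m
  have hx := pow_pos h.pos 3
  calc m * (1 - y) ≤ m * (log (a ^ 3) / m) := by
        gcongr
        linarith [hy.invRoot_le hx h.one_le_m, one_sub_invRoot_le m hx]
    _ = log (a ^ 3) := mul_div_cancel₀ _ hm0.ne'

lemma log_add_four_le :
    log (a ^ 3) + 4 ≤ a ^ 3 / (2 * m) * (4 * y / ((m * (1 - y)) ^ 2 + 4 * y)) := by
  have ha := h.pos
  have hm0 : (0 : ℝ) < m := mod_cast h.one_le_m
  have hL := h.le_log
  have hy1 := hy.one_sub_pos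
  have hmw : m / (3 * a ^ 2) ≤ invRoot m (a ^ 3) := by
    rw [div_le_iff₀' (by positivity)]
    exact le_mul_invRoot h.two_le h.one_le h.log_le h.le_sq
  have hmy := hmw.trans (hy.invRoot_le (pow_pos ha 3) h.one_le_m)
  have hLa : (log (a ^ 3) + 4) * (3 * (log (a ^ 3) ^ 2 + 4)) ≤ 2 * a := by
    calc (log (a ^ 3) + 4) * (3 * (log (a ^ 3) ^ 2 + 4))
        ≤ (2 * log (a ^ 3)) * (3 * (2 * log (a ^ 3) ^ 2)) := by
          gcongr <;> nlinarith
      _ = 12 * log (a ^ 3) ^ 3 := by ring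
      _ ≤ 2 * log (a ^ 3) * log (a ^ 3) ^ 3 := by
          gcongr
          linarith
      _ = 2 * log (a ^ 3) ^ 4 := by ring
      _ ≤ 2 * a := by linarith [h.log_pow_le]
  calc log (a ^ 3) + 4 ≤ 2 * a / (3 * (log (a ^ 3) ^ 2 + 4)) := by
        rwa [le_div_iff₀ (by positivity)]
    _ = a ^ 3 / (2 * m) * (4 * (m / (3 * a ^ 2)) / (log (a ^ 3) ^ 2 + 4)) := by
        field_simp
        norm_num
    _ ≤ a ^ 3 / (2 * m) * (4 * y / ((m * (1 - y)) ^ 2 + 4 * y)) := by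
        have hy0 := hy.pos
        gcongr
        · exact h.mul_one_sub_le hy
        · linarith

variable (hv : (1 - y)⁻¹ ≤ m + 1)
include hv

lemma div_one_sub_mul_log_le : y / (1 - y) * log (a ^ 3) ≤ 6 * m := by
  have hV := div_nonneg hy.pos.le hy.one_sub_pos.le
  calc y / (1 - y) * log (a ^ 3) ≤ y / (1 - y) * (6 * log (a ^ 3 / (m + 1))) := by
        gcongr
        exact h.log_le_six_mul_log
    _ = 6 * (y / (1 - y) * log (a ^ 3 / (m + 1))) := by ring
    _ ≤ 6 * m := by
        gcongr
        exact hy.div_one_sub_mul_log_le (pow_pos h.pos 3) hv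

lemma div_one_sub_le :
    y / (1 - y) ≤ 24 * (invRoot m (a ^ 3) / (1 - invRoot m (a ^ 3))) := by
  have hx := pow_pos h.pos 3
  have hx1 : 1 < a ^ 3 := one_lt_pow₀ (by linarith [h.le_a]) three_ne_zero
  have hm0 : (0 : ℝ) < m := mod_cast h.one_le_m
  have hw0 := invRoot_pos m hx
  have hw := invRoot_lt_one h.one_le_m hx1
  have hy1 := hy.one_sub_pos
  obtain hw4 | hw4 := le_total (invRoot m (a ^ 3)) (1 / 4)
  · have hyw := hy.le_two_mul_invRoot hx h.one_le_m hv
    calc y / (1 - y) ≤ 2 * invRoot m (a ^ 3) / (1 / 2) := by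
          gcongr
          linarith
      _ = 4 * invRoot m (a ^ 3) := by ring
      _ ≤ 24 * (invRoot m (a ^ 3) / (1 - invRoot m (a ^ 3))) := by
          gcongr
          · norm_num
          · exact invRoot_le_div_one_sub h.one_le_m hx1
  · rw [← mul_div_assoc, le_div_iff₀ (sub_pos.2 hw)]
    calc y / (1 - y) * (1 - invRoot m (a ^ 3)) ≤ y / (1 - y) * (log (a ^ 3) / m) := by
          gcongr
          · exact div_nonneg hy.pos.le hy1.le
          · exact one_sub_invRoot_le m hx
      _ = y / (1 - y) * log (a ^ 3) / m := by ring
      _ ≤ 6 * m / m :=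
          div_le_div_of_nonneg_right (h.div_one_sub_mul_log_le hy hv) hm0.le
      _ = 6 := mul_div_cancel_right₀ _ hm0.ne'
      _ ≤ 24 * invRoot m (a ^ 3) := by linarith

end SaddlePoint

variable {n : ℕ} (hn : (n : ℝ) = a ^ 3)
include hn

lemma eight_mul_succ_le : 8 * (m + 1 : ℝ) ≤ n := by
  have hm1 : (1 : ℝ) ≤ m := mod_cast h.one_le_m
  have ha := h.le_a
  calc 8 * (m + 1 : ℝ) ≤ 16 * m := by linarith
    _ ≤ a * a ^ 2 := by
        gcongr
        · linarith
        · exact h.le_sq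
    _ = n := by rw [hn, pow_succ' a 2]

lemma abs_permProb_mul_sub_one_le {y : ℝ} (hy : IsSaddlePoint m n y) (hv : (1 - y)⁻¹ ≤ m + 1) :
    |permProb n m * y⁻¹ ^ n * exp (-truncLog m y⁻¹) * √(2 * π * n * m) - 1| ≤
      200000 * (y / (1 - y) / m + √(m / n)) := by
  have hm1 : (1 : ℝ) ≤ m := mod_cast h.one_le_m
  have hmn := h.eight_mul_succ_le hn
  have hV := div_pos hy.pos hy.one_sub_pos
  refine hy.abs_permProb_mul_sub_one_le h.one_le_m ?_ (by linarith) ?_ fun θ hθ hθπ ↦ ?_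
  · have : (m : ℝ) ≤ n := by linarith
    exact_mod_cast this
  · have hVL := h.div_one_sub_mul_log_le (hn ▸ hy) hv
    linarith [mul_le_mul_of_nonneg_left h.le_log hV.le]
  · have hre := hy.re_circlePhase_le_sub h.one_le_m hθ hθπ
    have hinv : 2 * (1 - y)⁻¹ / m ≤ 4 := by
      rw [div_le_iff₀ (by linarith)]
      linarith
    have hlog := h.log_add_four_le (hn ▸ hy)
    rw [hn] at hre ⊢
    linarith

lemma abs_logError_le :
    |logError n m| ≤ 11000000 * (invRoot m n / (1 - invRoot m n)) := by
  have hm0 : (0 : ℝ) < m := mod_cast h.one_le_m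
  have hmn := h.eight_mul_succ_le hn
  have hx1 : 1 < a ^ 3 := one_lt_pow₀ (by linarith [h.le_a]) three_ne_zero
  have hL := h.le_log
  obtain ⟨y, hy, hv⟩ : ∃ y, IsSaddlePoint m n y ∧ (1 - y)⁻¹ ≤ m + 1 :=
    exists_isSaddlePoint h.one_le_m (by linarith)
  have hy' : IsSaddlePoint m (a ^ 3) y := hn ▸ hy
  have hV := h.div_one_sub_le hy' hv
  have hw := invRoot_le_div_one_sub h.one_le_m hx1
  have hVm : y / (1 - y) / m ≤ 6 / log (a ^ 3) := by
    rw [div_le_div_iff₀ hm0 (by linarith)]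
    exact h.div_one_sub_mul_log_le hy' hv
  have hsmall : 200000 * (6 / log (a ^ 3) + 1 / log (a ^ 3)) ≤ 1 / 2 := by
    rw [← add_div, ← mul_div_assoc, div_le_iff₀ (by linarith)]
    linarith
  have hlog := abs_log_le_two_mul (h.abs_permProb_mul_sub_one_le hn hy hv) <| by
    rw [hn]
    linarith [h.sqrt_div_le_inv_log]
  have hexp := hy.abs_truncLog_add_mainExponent_le h.one_le_m hv
  have hVm' := div_le_self (div_pos hy.pos hy.one_sub_pos).le (mod_cast h.one_le_m : (1 : ℝ) ≤ m)
  have hn1 : 1 ≤ n := Nat.one_le_cast.1 (by linarith : (1 : ℝ) ≤ n)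
  rw [hy.logError_eq h.one_le_m hn1]
  refine (abs_add_le _ _).trans ?_
  rw [hn] at hlog hexp ⊢
  linarith [h.sqrt_div_le_invRoot, invRoot_pos m (pow_pos h.pos 3)]

end IsShortRange

end ShortCycles

section Stirling

open Filter Topology Stirling

lemma monotone_log_stirlingSeq_sub :
    Monotone fun k : ℕ ↦ log (stirlingSeq (k + 1)) - 1 / (12 * (k + 1 : ℝ)) := by
  refine monotone_nat_of_le_succ fun k ↦ ?_
  have hstep := log_stirlingSeq_sdiff_le (k + 1)
  have htel : 1 / (12 * ((k + 1 : ℕ) : ℝ) * ((k + 1 : ℕ) + 1)) =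
      1 / (12 * (k + 1 : ℝ)) - 1 / (12 * ((k + 1 : ℕ) + 1 : ℝ)) := by
    push_cast
    field_simp
    ring
  linarith

lemma tendsto_log_stirlingSeq_sub :
    Tendsto (fun k : ℕ ↦ log (stirlingSeq (k + 1)) - 1 / (12 * (k + 1 : ℝ))) atTop
      (𝓝 (log √π)) := by
  have hlog := (tendsto_stirlingSeq_sqrt_pi.comp (tendsto_add_atTop_nat 1)).log
    (sqrt_pos.2 pi_pos).ne'
  have hinv := (tendsto_one_div_add_atTop_nhds_zero_nat (𝕜 := ℝ)).const_mul (1 / 12)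
  rw [mul_zero] at hinv
  refine ((hlog.sub hinv).congr fun k ↦ ?_).trans (by rw [sub_zero])
  rw [Function.comp_apply]
  field_simp

lemma log_stirlingSeq_le {n : ℕ} (hn : 1 ≤ n) :
    log (stirlingSeq n) ≤ log √π + 1 / (12 * n) := by
  obtain ⟨k, rfl⟩ := Nat.exists_eq_add_of_le' hn
  have h := monotone_log_stirlingSeq_sub.ge_of_tendsto tendsto_log_stirlingSeq_sub k
  push_cast
  linarith

lemma logError_one_right {n : ℕ} (hn : 1 ≤ n) :
    logError n 1 = log √π - log (stirlingSeq n) := by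
  have hn0 : (0 : ℝ) < n := mod_cast hn
  have hd : dcoef 1 1 = 0 := by simp [dcoef]
  rw [logError, mainExponent, permProb_one_right, log_inv, log_stirlingSeq_formula, Finset.Icc_self,
    Finset.sum_singleton, hd, log_sqrt pi_pos.le, log_div hn0.ne' (exp_pos _).ne', log_exp,
    Nat.cast_one, mul_one, log_mul (by positivity) hn0.ne', log_mul two_ne_zero pi_ne_zero,
    log_mul two_ne_zero hn0.ne']
  ring

lemma abs_logError_one_right_le {n : ℕ} (hn : 2 ≤ n) :
    |logError n 1| ≤ invRoot 1 n / (1 - invRoot 1 n) := by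
  have hn1 : (1 : ℝ) < n := mod_cast hn
  have hw : invRoot 1 (n : ℝ) = (n : ℝ)⁻¹ := by
    rw [← invRoot_pow le_rfl (by linarith), pow_one]
  have hlow := log_le_log (sqrt_pos.2 pi_pos) (sqrt_pi_le_stirlingSeq (by omega : n ≠ 0))
  have hupp := log_stirlingSeq_le (by omega : 1 ≤ n)
  rw [logError_one_right (by omega), abs_of_nonpos (by linarith)]
  calc -(log √π - log (stirlingSeq n)) ≤ 1 / (12 * n) := by linarith
    _ ≤ 1 / n := by gcongr; linarith
    _ = invRoot 1 n := by rw [hw, one_div]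
    _ ≤ invRoot 1 n / (1 - invRoot 1 n) := invRoot_le_div_one_sub le_rfl hn1

end Stirling

section TrivialBound

open Finset
open scoped Nat

lemma Gamma_add_le_rpow_mul_Gamma {s α : ℝ} (hs : 0 < s) (hα0 : 0 < α) (hα1 : α < 1) :
    Gamma (s + α) ≤ s ^ α * Gamma s := by
  have hΓ := Gamma_pos_of_pos hs
  calc Gamma (s + α) = Gamma ((1 - α) * s + α * (s + 1)) := by ring_nf
    _ ≤ Gamma s ^ (1 - α) * Gamma (s + 1) ^ α :=
        Gamma_mul_add_mul_le_rpow_Gamma_mul_rpow_Gamma hs (by linarith) (by linarith) hα0 (by ring)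
    _ = Gamma s ^ (1 - α) * (s ^ α * Gamma s ^ α) := by
        rw [Gamma_add_one hs.ne', mul_rpow hs.le hΓ.le]
    _ = s ^ α * Gamma s ^ (1 - α + α) := by
        rw [rpow_add hΓ]
        ring
    _ = s ^ α * Gamma s := by rw [sub_add_cancel, rpow_one]

lemma one_half_le_Gamma_one_add {α : ℝ} (hα0 : 0 ≤ α) (hα1 : α ≤ 1) :
    1 / 2 ≤ Gamma (1 + α) := by
  have hmono : Gamma 2 ≤ Gamma (1 + α + 1) :=
    Gamma_strictMonoOn_Ici.monotoneOn (Set.mem_Ici.2 le_rfl) (Set.mem_Ici.2 (by linarith))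
      (by linarith)
  rw [Gamma_two, Gamma_add_one (by linarith)] at hmono
  nlinarith [Gamma_pos_of_pos (by linarith : 0 < 1 + α)]

section Coefficients

variable {m i : ℕ} (hi : 1 ≤ i) (him : i < m)
include hi him

lemma dcoef_nonneg : 0 ≤ dcoef m i := by
  have him0 : (i : ℝ) < m := mod_cast him
  rw [dcoef, if_neg him.ne]
  exact div_nonneg (Gamma_nonneg_of_nonneg (by positivity)) <|
    mul_nonneg (mul_nonneg (by linarith) (by positivity)) (Gamma_nonneg_of_nonneg (by positivity))

lemma dcoef_le : dcoef m i ≤ 2 * (i : ℝ) ^ ((i : ℝ) / m) / (i * (m - i)) := by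
  have hi0 : (0 : ℝ) < i := mod_cast hi
  have him0 : (i : ℝ) < m := mod_cast him
  have hα0 : 0 < (i : ℝ) / m := div_pos hi0 (by linarith)
  have hα1 : (i : ℝ) / m < 1 := (div_lt_one (by linarith)).2 him0
  have hfac : (i ! : ℝ) = i * Gamma i := by rw [← Gamma_add_one hi0.ne', Gamma_nat_eq_factorial]
  have := Gamma_pos_of_pos hi0
  have hmi : (0 : ℝ) < m - i := by linarith
  rw [dcoef, if_neg him.ne, hfac]
  calc Gamma (i + i / m) / ((m - i) * (i * Gamma i) * Gamma (1 + i / m))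
      ≤ (i : ℝ) ^ ((i : ℝ) / m) * Gamma i / ((m - i) * (i * Gamma i) * (1 / 2)) := by
        gcongr
        · exact Gamma_add_le_rpow_mul_Gamma hi0 hα0 hα1
        · exact one_half_le_Gamma_one_add hα0.le hα1.le
    _ = 2 * (i : ℝ) ^ ((i : ℝ) / m) / (i * (m - i)) := by field_simp

lemma dcoef_mul_rpow_le {n : ℕ} (hmn : m ≤ n) :
    dcoef m i * (n : ℝ) ^ (1 - (i : ℝ) / m) ≤ 2 * n / m * (1 / i + 1 / (m - i)) := by
  have hi0 : (0 : ℝ) < i := mod_cast hi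
  have him0 : (i : ℝ) < m := mod_cast him
  have hin : (i : ℝ) ≤ n := mod_cast him.le.trans hmn
  have hn0 : (0 : ℝ) < n := hi0.trans_le hin
  have hmi : (0 : ℝ) < m - i := by linarith
  have hm0 : (0 : ℝ) < m := by linarith
  calc dcoef m i * (n : ℝ) ^ (1 - (i : ℝ) / m)
      ≤ 2 * (n : ℝ) ^ ((i : ℝ) / m) / (i * (m - i)) * (n : ℝ) ^ (1 - (i : ℝ) / m) := by
        gcongr
        refine (dcoef_le hi him).trans ?_
        gcongr
    _ = 2 * (n : ℝ) ^ ((i : ℝ) / m + (1 - (i : ℝ) / m)) / (i * (m - i)) := by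
        rw [rpow_add hn0]
        ring
    _ = 2 * n / m * (1 / i + 1 / (m - i)) := by
        rw [add_sub_cancel, rpow_one]
        field_simp
        ring

end Coefficients

lemma abs_dcoef_self_le (m : ℕ) : |dcoef m m| ≤ 1 := by
  have hsum : ∑ j ∈ Icc 2 m, (1 : ℝ) / j ≤ m := by
    calc ∑ j ∈ Icc 2 m, (1 : ℝ) / j ≤ ∑ j ∈ Icc 2 m, 1 := by
          gcongr with j hj
          exact div_le_one_of_le₀ (mod_cast one_le_two.trans (mem_Icc.1 hj).1) j.cast_nonneg
      _ ≤ m := by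
          rw [sum_const, Nat.card_Icc, nsmul_one]
          exact_mod_cast (by omega : m + 1 - 2 ≤ m)
  rw [dcoef, if_pos rfl, neg_mul, abs_neg, abs_of_nonneg (by positivity), one_div,
    inv_mul_eq_div]
  exact div_le_one_of_le₀ hsum m.cast_nonneg

lemma sum_Ico_one_div_le {m n : ℕ} (hm : 1 ≤ m) (hmn : m ≤ n) :
    ∑ i ∈ Ico 1 m, 1 / (i : ℝ) ≤ 1 + log n := by
  have hsub : ∑ i ∈ Ico 1 m, 1 / (i : ℝ) ≤ ∑ i ∈ Icc 1 m, (i : ℝ)⁻¹ := by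
    simp only [one_div]
    exact sum_le_sum_of_subset_of_nonneg Ico_subset_Icc_self fun i _ _ ↦ by positivity
  have hharm := harmonic_le_one_add_log m
  rw [harmonic_eq_sum_Icc] at hharm
  push_cast at hharm
  have hlog : log m ≤ log n := log_le_log (mod_cast hm) (mod_cast hmn)
  linarith

lemma sum_Ico_dcoef_mul_rpow_le {m n : ℕ} (hm : 1 ≤ m) (hmn : m ≤ n) :
    ∑ i ∈ Ico 1 m, dcoef m i * (n : ℝ) ^ (1 - (i : ℝ) / m) ≤ 4 * (n / m) * (1 + log n) := by
  have hreflect : ∑ i ∈ Ico 1 m, 1 / ((m : ℝ) - i) = ∑ i ∈ Ico 1 m, 1 / (i : ℝ) := by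
    have h := sum_Ico_reflect (fun i ↦ 1 / (i : ℝ)) 1 (Nat.le_succ m)
    rw [Nat.add_sub_cancel_left, Nat.add_sub_cancel] at h
    refine (sum_congr rfl fun i hi ↦ ?_).trans h
    rw [Nat.cast_sub (mem_Ico.1 hi).2.le]
  have hharm := sum_Ico_one_div_le hm hmn
  calc ∑ i ∈ Ico 1 m, dcoef m i * (n : ℝ) ^ (1 - (i : ℝ) / m)
      ≤ ∑ i ∈ Ico 1 m, 2 * n / m * (1 / (i : ℝ) + 1 / ((m : ℝ) - i)) :=
        sum_le_sum fun i hi ↦ dcoef_mul_rpow_le (mem_Ico.1 hi).1 (mem_Ico.1 hi).2 hmn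
    _ = 4 * (n / m) * ∑ i ∈ Ico 1 m, 1 / (i : ℝ) := by
        rw [← mul_sum, sum_add_distrib, hreflect]
        ring
    _ ≤ 4 * (n / m) * (1 + log n) := by gcongr

lemma abs_sum_dcoef_mul_rpow_le {m n : ℕ} (hm : 1 ≤ m) (hmn : m ≤ n) :
    |∑ i ∈ Icc 1 m, dcoef m i * (n : ℝ) ^ (1 - (i : ℝ) / m)| ≤
      1 + 4 * (n / m) * (1 + log n) := by
  have hm0 : (m : ℝ) ≠ 0 := Nat.cast_ne_zero.2 (by omega)
  rw [← Ico_insert_right hm, sum_insert right_notMem_Ico, div_self hm0, sub_self, rpow_zero,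
    mul_one]
  refine (abs_add_le _ _).trans (add_le_add (abs_dcoef_self_le m) ?_)
  rw [abs_of_nonneg]
  · exact sum_Ico_dcoef_mul_rpow_le hm hmn
  · exact sum_nonneg fun i hi ↦ mul_nonneg
      (dcoef_nonneg (mem_Ico.1 hi).1 (mem_Ico.1 hi).2) (by positivity)

lemma abs_log_two_pi_mul_le {m n : ℕ} (hm : 1 ≤ m) (hmn : m ≤ n) :
    |log (2 * π * n * m)| ≤ 2 + 2 * log n := by
  have hm1 : (1 : ℝ) ≤ m := mod_cast hm
  have hmn' : (m : ℝ) ≤ n := mod_cast hmn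
  have hn0 : (0 : ℝ) < n := by linarith
  have hπ : 2 * π ≤ exp 2 := by
    rw [show (2 : ℝ) = 1 + 1 by norm_num, exp_add]
    nlinarith [exp_one_gt_d9, pi_lt_d2]
  have h1 : 1 ≤ 2 * π * n * m := by
    calc (1 : ℝ) = 1 * 1 * 1 := by norm_num
      _ ≤ 2 * π * n * m := by
          gcongr <;> linarith [pi_gt_three]
  rw [abs_of_nonneg (log_nonneg h1)]
  calc log (2 * π * n * m) ≤ log (exp 2 * n * n) := by gcongr
    _ = 2 + 2 * log n := by
        rw [log_mul (by positivity) hn0.ne', log_mul (exp_pos 2).ne' hn0.ne', log_exp]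
        ring

lemma abs_logError_le_mul_log {m n : ℕ} (hm : 1 ≤ m) (hmn : m ≤ n) (hn : 2 ≤ n) :
    |logError n m| ≤ 50 * (n / m * log n) := by
  have hm0 : (0 : ℝ) < m := mod_cast hm
  have hu : (1 : ℝ) ≤ n / m := (one_le_div hm0).2 (mod_cast hmn)
  have hL : 1 / 2 ≤ log n := by
    have : log 2 ≤ log n := log_le_log two_pos (mod_cast hn)
    linarith [log_two_gt_d9]
  have hlow := neg_div_mul_log_le_log_permProb hm le_rfl (n := n)
  have hupp := log_nonpos (permProb_pos n m).le (permProb_le_one n m)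
  have hpi := abs_le.1 (abs_log_two_pi_mul_le hm hmn)
  have hsum := abs_le.1 (abs_sum_dcoef_mul_rpow_le hm hmn)
  rw [logError, mainExponent, abs_le]
  constructor <;> nlinarith [mul_le_mul hu hL (by norm_num) (by linarith)]

end TrivialBound

section AllRanges

open Filter

variable {m n : ℕ}

lemma div_one_sub_invRoot_nonneg (hm : 1 ≤ m) (hn : 2 ≤ n) :
    0 ≤ invRoot m n / (1 - invRoot m n) := by
  have hn1 : (1 : ℝ) < n := mod_cast hn
  exact div_nonneg (invRoot_pos m (by linarith)).le (sub_pos.2 (invRoot_lt_one hm hn1)).le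

lemma abs_logError_le_pow_three_mul (hm : 1 ≤ m) (hmn : m ≤ n) (hn : 2 ≤ n) :
    |logError n m| ≤ 50 * n ^ 3 * (invRoot m n / (1 - invRoot m n)) := by
  have hm1 : (1 : ℝ) ≤ m := mod_cast hm
  have hn1 : (1 : ℝ) < n := mod_cast hn
  have hn0 : (0 : ℝ) < n := by linarith
  have hw : (n : ℝ)⁻¹ ≤ invRoot m n :=
    inv_le_invRoot hm hn0 hn0 (le_self_pow₀ hn1.le (by omega))
  calc |logError n m| ≤ 50 * (n / m * log n) := abs_logError_le_mul_log hm hmn hn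
    _ ≤ 50 * (n * n) := by
        gcongr
        · exact div_le_self hn0.le hm1
        · exact log_le_self hn0.le
    _ = 50 * n ^ 3 * (n : ℝ)⁻¹ := by field_simp
    _ ≤ 50 * n ^ 3 * (invRoot m n / (1 - invRoot m n)) := by
        gcongr
        exact hw.trans (invRoot_le_div_one_sub hm hn1)

lemma abs_logError_le_of_sq_le {a : ℝ} (hmn : m ≤ n) (hn : n = a ^ 3) (ha : 1 < a)
    (hL : 1 ≤ log n) (hLa : log n ^ 4 ≤ a) (hma : a ^ 2 ≤ m) :
    |logError n m| ≤ 150 * (invRoot m n / (1 - invRoot m n)) := by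
  have : 0 < a := by linarith
  have hm0 : (0 : ℝ) < m := lt_of_lt_of_le (by positivity) hma
  have hm : 1 ≤ m := Nat.cast_pos.1 hm0
  have hn1 : (1 : ℝ) < n := hn ▸ one_lt_pow₀ ha three_ne_zero
  have hlogm : log n ≤ m := by
    calc log n ≤ log n ^ 4 := le_self_pow₀ hL four_ne_zero
      _ ≤ a ^ 2 := hLa.trans (le_self_pow₀ ha.le two_ne_zero)
      _ ≤ m := hma
  have hR : 1 / 3 / (log n / m) ≤ invRoot m n / (1 - invRoot m n) := by
    gcongr
    · exact (invRoot_pos m (by linarith)).le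
    · exact sub_pos.2 (invRoot_lt_one hm hn1)
    · exact one_third_le_invRoot hm (by linarith) hlogm
    · exact one_sub_invRoot_le m (by linarith)
  have hmain : n / m * log n ≤ m / log n := by
    rw [le_div_iff₀ (by linarith)]
    calc n / m * log n * log n = a ^ 3 * log n ^ 2 / m := by
          rw [hn]
          ring
      _ ≤ a ^ 3 * a / a ^ 2 := by
          gcongr
          exact (pow_le_pow_right₀ hL (by norm_num)).trans hLa
      _ = a ^ 2 := by field_simp
      _ ≤ m := hma
  calc |logError n m| ≤ 50 * (n / m * log n) :=
        abs_logError_le_mul_log hm hmn (mod_cast hn1)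
    _ ≤ 50 * (m / log n) := by gcongr
    _ = 150 * (1 / 3 / (log n / m)) := by
        field_simp
        norm_num
    _ ≤ 150 * (invRoot m n / (1 - invRoot m n)) := by gcongr

lemma eventually_log_pow_four_le :
    ∀ᶠ n : ℕ in atTop, 3000000 ≤ log n ∧ log n ^ 4 ≤ (n : ℝ) ^ (1 / 3 : ℝ) := by
  have hlog := tendsto_log_atTop.eventually_ge_atTop 3000000
  have hpow := (isLittleO_log_rpow_rpow_atTop (r := 4) (by norm_num : (0 : ℝ) < 1 / 3)).bound
    one_pos
  have hcast := tendsto_natCast_atTop_atTop (R := ℝ)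
  filter_upwards [hcast.eventually hlog, hcast.eventually hpow] with n hx hxpow
  refine ⟨hx, ?_⟩
  rw [one_mul, norm_of_nonneg (by positivity), norm_of_nonneg (by positivity)] at hxpow
  exact_mod_cast hxpow

lemma abs_logError_le_of_log_pow_four_le (hm : 1 ≤ m) (hmn : m < n) (hL : 3000000 ≤ log n)
    (hLn : log n ^ 4 ≤ (n : ℝ) ^ (1 / 3 : ℝ)) :
    |logError n m| ≤ 11000000 * (invRoot m n / (1 - invRoot m n)) := by
  have hR := div_one_sub_invRoot_nonneg hm (by omega : 2 ≤ n)
  set a : ℝ := (n : ℝ) ^ (1 / 3 : ℝ) with ha_def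
  have hna : (n : ℝ) = a ^ 3 := by
    rw [ha_def, ← rpow_natCast, ← rpow_mul n.cast_nonneg]
    norm_num
  have ha : 1 < a := by
    linarith [le_self_pow₀ (by linarith : 1 ≤ log n) four_ne_zero]
  obtain rfl | hm2 := hm.eq_or_lt
  · linarith [abs_logError_one_right_le (by omega : 2 ≤ n)]
  obtain hma | hma := le_total (m : ℝ) (a ^ 2)
  · exact IsShortRange.abs_logError_le ⟨ha.le, hm2, hma, hna ▸ hL, hna ▸ hLn⟩ hna
  · linarith [abs_logError_le_of_sq_le hmn.le hna ha (by linarith) hLn hma]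

theorem exists_abs_logError_le :
    ∃ C : ℝ, 0 < C ∧ ∀ n m : ℕ, 1 ≤ m → m < n →
      |logError n m| ≤ C * (invRoot m n / (1 - invRoot m n)) := by
  obtain ⟨N, hN⟩ := eventually_atTop.1 eventually_log_pow_four_le
  refine ⟨11000000 + 50 * (N : ℝ) ^ 3, by positivity, fun n m hm hmn ↦ ?_⟩
  have hR := div_one_sub_invRoot_nonneg hm (by omega : 2 ≤ n)
  obtain hnN | hnN := le_total N n
  · obtain ⟨hL, hLn⟩ := hN n hnN
    refine (abs_logError_le_of_log_pow_four_le hm hmn hL hLn).trans ?_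
    gcongr
    exact le_add_of_nonneg_right (by positivity)
  · refine (abs_logError_le_pow_three_mul hm hmn.le (by omega)).trans ?_
    gcongr
    calc 50 * (n : ℝ) ^ 3 ≤ 50 * (N : ℝ) ^ 3 := by gcongr
      _ ≤ 11000000 + 50 * (N : ℝ) ^ 3 := by linarith

end AllRanges

/-- There exists an absolute constant `C > 0` such that for all integers
`n > m ≥ 1`, writing `u = n/m`, there is a real `E` with
`|E| ≤ C·(n^{−1/m}/(1 − n^{−1/m}) + (m/n)/(1 − (m/n)^{1/m}))` such that
`|p_{n,m}·√(2π·n·m)·exp(u·log n − u − ∑_{i=1}^m d_{m,i}·n^{1−i/m} − E) − 1| ≤ C/max{log u, n^{1/m}}`. -/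
theorem stmt3 :
    ∃ C : ℝ, 0 < C ∧ ∀ n m : ℕ, 1 ≤ m → m < n → ∀ u : ℝ, u = (n : ℝ) / (m : ℝ) →
      ∃ E : ℝ,
        |E| ≤ C * ((n : ℝ) ^ (-(1 : ℝ) / (m : ℝ)) / (1 - (n : ℝ) ^ (-(1 : ℝ) / (m : ℝ))) +
          ((m : ℝ) / (n : ℝ)) / (1 - ((m : ℝ) / (n : ℝ)) ^ ((1 : ℝ) / (m : ℝ)))) ∧
        |permProb n m * Real.sqrt (2 * Real.pi * (n : ℝ) * (m : ℝ)) *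
            Real.exp (u * Real.log n - u -
              (∑ i ∈ Finset.Icc 1 m, dcoef m i * (n : ℝ) ^ (1 - (i : ℝ) / (m : ℝ))) - E) - 1| ≤
          C / max (Real.log u) ((n : ℝ) ^ ((1 : ℝ) / (m : ℝ))) := by
  obtain ⟨C, hC, hlogError⟩ := exists_abs_logError_le
  refine ⟨C, hC, fun n m hm hmn u hu ↦ ⟨logError n m, ?_, ?_⟩⟩
  · have hratio : (m : ℝ) / n ≤ 1 := div_le_one_of_le₀ (mod_cast hmn.le) n.cast_nonneg
    have hroot := rpow_le_one (by positivity) hratio (by positivity : 0 ≤ (1 : ℝ) / m)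
    refine (hlogError n m hm hmn).trans (mul_le_mul_of_nonneg_left ?_ hC.le)
    exact le_add_of_nonneg_right (div_nonneg (by positivity) (sub_nonneg.2 hroot))
  · have hone := permProb_mul_sqrt_mul_exp_sub_logError hm (hm.trans hmn.le)
    rw [hu, ← mainExponent, hone, sub_self, abs_zero]
    exact div_nonneg hC.le (le_max_of_le_right (by positivity))
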